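/- arXiv:2106.11194 — 4 statements merged into one kernel-verified Lean document; each statement's English description precedes it below -/
import Mathlib

section
/- (Theorem 2.2.) Assume p := Σ_{j=1}^m p_j > δ and let K > 0 satisfy Σ_j p_j e^{−a_j K} = δ. If limsup_{t→∞} Σ_{j=1}^m a_j p_j e^{−a_j K} ∫_{t−σ_j(t)}^{t} β(s) ds < (Σ_{j=1}^m a_j p_j e^{−a_j K}) / (2δ + K Σ_{j=1}^m a_j p_j e^{−a_j K}), then K is locally exponentially stable: there exist ε > 0, M ≥ 1 and λ > 0 such that every solution x of the Nicholson equation with admissible initial data satisfying sup_{s∈[t₀−τ,t₀]} |x(s) − K| ≤ ε obeys |x(t) − K| ≤ M e^{−λ(t−t₀)} sup_{s∈[t₀−τ,t₀]} |x(s) − K| for all t ≥ t₀. -/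
lemma nich_term (K a u v S r : ℝ) (hK : 0 < K) (ha : 0 < a) (hu : |u| ≤ S) (hv : |v| ≤ S)
    (hS : S ≤ r) (hr : a * r ≤ 1) :
    |(K + u) * Real.exp (-a * v) - K - u + K * a * v| ≤ (K * a ^ 2 + 2 * a) * r * S := by
  have hS0 : 0 ≤ S := (abs_nonneg u).trans hu
  have hav : |-a * v| = a * |v| := by rw [abs_mul, abs_neg, abs_of_pos ha]
  have hav1 : |-a * v| ≤ 1 := by
    rw [hav]; exact (mul_le_mul_of_nonneg_left (hv.trans hS) ha.le).trans hr
  have h1 := Real.abs_exp_sub_one_sub_id_le hav1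
  have h2 := Real.abs_exp_sub_one_le hav1
  have e : (K + u) * Real.exp (-a * v) - K - u + K * a * v
      = K * (Real.exp (-a * v) - 1 - (-a * v)) + u * (Real.exp (-a * v) - 1) := by ring
  rw [e]
  refine (abs_add_le _ _).trans ?_
  rw [abs_mul, abs_mul, abs_of_pos hK]
  have h3 : (-a * v) ^ 2 ≤ a ^ 2 * (r * S) := by
    have : v ^ 2 ≤ r * S := by
      rw [← sq_abs]; nlinarith [abs_nonneg v]
    nlinarith [sq_nonneg a]
  have h4 : |u| * |Real.exp (-a * v) - 1| ≤ r * (2 * (a * S)) := by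
    apply mul_le_mul (hu.trans hS) _ (abs_nonneg _) (hS0.trans hS)
    rw [hav] at h2
    nlinarith
  have h5 : K * |Real.exp (-a * v) - 1 - (-a * v)| ≤ K * (a ^ 2 * (r * S)) :=
    mul_le_mul_of_nonneg_left (h1.trans h3) hK.le
  nlinarith

lemma nich_rem (m : ℕ) (p a u v : Fin m → ℝ) (δ K S r y0 : ℝ) (hp : ∀ j, 0 < p j)
    (ha : ∀ j, 0 < a j) (hK0 : 0 < K) (hK : ∑ j, p j * Real.exp (-(a j) * K) = δ)
    (hu : ∀ j, |u j - K| ≤ S) (hv : ∀ j, |v j - K| ≤ S) (hS : S ≤ r) (hr : ∀ j, a j * r ≤ 1) :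
    |(∑ j, p j * u j * Real.exp (-(a j) * v j)) - δ * y0
      - ((∑ j, p j * Real.exp (-(a j) * K) * (u j - K))
        - K * (∑ j, a j * p j * Real.exp (-(a j) * K) * (v j - K)) - δ * (y0 - K))|
      ≤ (∑ j, p j * Real.exp (-(a j) * K) * (K * a j ^ 2 + 2 * a j)) * r * S := by
  have e : (∑ j, p j * u j * Real.exp (-(a j) * v j)) - δ * y0
      - ((∑ j, p j * Real.exp (-(a j) * K) * (u j - K))
        - K * (∑ j, a j * p j * Real.exp (-(a j) * K) * (v j - K)) - δ * (y0 - K))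
      = ∑ j, p j * Real.exp (-(a j) * K) *
        ((K + (u j - K)) * Real.exp (-(a j) * (v j - K)) - K - (u j - K)
          + K * a j * (v j - K)) := by
    have h1 : ∀ j, p j * u j * Real.exp (-(a j) * v j)
        = p j * Real.exp (-(a j) * K) * ((K + (u j - K)) * Real.exp (-(a j) * (v j - K))) := by
      intro j
      have : Real.exp (-(a j) * v j) = Real.exp (-(a j) * K) * Real.exp (-(a j) * (v j - K)) := by
        rw [← Real.exp_add]; ring_nf
      rw [this]; ring
    have h2 : δ * K = ∑ j, p j * Real.exp (-(a j) * K) * K := by rw [← hK, Finset.sum_mul]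
    have h3 : ∀ A B C : ℝ, A - δ * y0 - (B - C - δ * (y0 - K)) = A - B + C - δ * K := by
      intros; ring
    rw [h3, h2, Finset.mul_sum, ← Finset.sum_sub_distrib, ← Finset.sum_add_distrib,
      ← Finset.sum_sub_distrib]
    refine Finset.sum_congr rfl fun j _ => ?_
    rw [h1]; ring
  rw [e, Finset.sum_mul, Finset.sum_mul]
  refine (Finset.abs_sum_le_sum_abs _ _).trans (Finset.sum_le_sum fun j _ => ?_)
  have hb : 0 < p j * Real.exp (-(a j) * K) := mul_pos (hp j) (Real.exp_pos _)
  rw [abs_mul, abs_of_pos hb]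
  have := nich_term K (a j) (u j - K) (v j - K) S r hK0 (ha j) (hu j) (hv j) hS (hr j)
  calc _ ≤ _ := mul_le_mul_of_nonneg_left this hb.le
    _ = _ := by ring

lemma nich_deriv_nonpos (g : ℝ → ℝ) (d T t : ℝ) (hTt : T < t) (hg : HasDerivAt g d t)
    (h0 : ∀ s ∈ Set.Icc T t, 0 ≤ g s) (ht : g t = 0) : d ≤ 0 := by
  have h := (hasDerivWithinAt_iff_tendsto_slope' (s := Set.Iio t) (by simp)).1
    (hg.hasDerivWithinAt (s := Set.Iio t))
  refine le_of_tendsto h ?_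
  filter_upwards [Ioo_mem_nhdsLT hTt] with s hs
  rw [slope_def_field, ht, sub_zero]
  exact div_nonpos_of_nonneg_of_nonpos (h0 s ⟨hs.1.le, hs.2.le⟩) (by linarith [hs.2])

lemma nich_cross (y w y' w' : ℝ → ℝ) (T T1 : ℝ) (hyc : ContinuousOn y (Set.Icc T T1))
    (hwc : Continuous w)
    (hy : ∀ t, T < t → HasDerivAt y (y' t) t) (hw : ∀ t, HasDerivAt w (w' t) t)
    (h0 : |y T| < w T)
    (H : ∀ t, T < t → t ≤ T1 → (∀ s ∈ Set.Icc T t, |y s| ≤ w s) →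
      (y t = w t → y' t < w' t) ∧ (y t = - w t → - y' t < w' t)) :
    ∀ t ∈ Set.Icc T T1, |y t| < w t := by
  by_contra! hcon
  obtain ⟨t1, ht1, h1⟩ := hcon
  set A : Set ℝ := {t ∈ Set.Icc T T1 | w t ≤ |y t|} with hA
  have hAc : IsClosed A := isClosed_Icc.isClosed_le hwc.continuousOn hyc.abs
  have hAb : BddBelow A := ⟨T, fun t ht => ht.1.1⟩
  have hm : sInf A ∈ A := hAc.csInf_mem ⟨t1, ht1, h1⟩ hAb
  set t := sInf A with htdef
  have hTt : T < t := by
    rcases eq_or_lt_of_le hm.1.1 with h | h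
    · have := hm.2
      rw [← h] at this; linarith
    · exact h
  have hlt : ∀ s ∈ Set.Ico T t, |y s| < w s := by
    intro s hs
    by_contra! hc
    have : t ≤ s := csInf_le hAb ⟨⟨hs.1, hs.2.le.trans hm.1.2⟩, hc⟩
    linarith [hs.2]
  have hyt : ContinuousWithinAt y (Set.Icc T T1) t := hyc t hm.1
  have hle : |y t| ≤ w t := by
    have hc : ContinuousAt (fun s => w s - |y s|) t :=
      hwc.continuousAt.sub (hy t hTt).continuousAt.abs
    have : 0 ≤ w t - |y t| := by
      refine ge_of_tendsto (hc.tendsto.mono_left (nhdsWithin_le_nhds (s := Set.Iio t))) ?_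
      filter_upwards [Ioo_mem_nhdsLT hTt] with s hs
      linarith [hlt s ⟨hs.1.le, hs.2⟩]
    linarith
  have heq : |y t| = w t := le_antisymm hle hm.2
  have hall : ∀ s ∈ Set.Icc T t, |y s| ≤ w s := by
    intro s hs
    rcases eq_or_lt_of_le hs.2 with h | h
    · rw [h]; exact hle
    · exact (hlt s ⟨hs.1, h⟩).le
  obtain ⟨H1, H2⟩ := H t hTt hm.1.2 hall
  rcases abs_choice (y t) with h | h
  · have hh : y t = w t := by rw [← h, heq]
    have := nich_deriv_nonpos (fun s => w s - y s) _ T t hTt ((hw t).sub (hy t hTt))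
      (fun s hs => by linarith [le_abs_self (y s), hall s hs]) (by simp [hh])
    linarith [H1 hh]
  · have hh : y t = - w t := by rw [← heq, h]; ring
    have := nich_deriv_nonpos (fun s => w s + y s) _ T t hTt ((hw t).add (hy t hTt))
      (fun s hs => by linarith [neg_abs_le (y s), hall s hs]) (by simp [hh])
    linarith [H2 hh]

lemma nich_mv (y y' β : ℝ → ℝ) (t₀ a b L : ℝ) (ha : t₀ ≤ a) (hab : a ≤ b)
    (hβ : ContinuousOn β (Set.Ici t₀))
    (hy : ∀ t ∈ Set.Ici t₀, HasDerivWithinAt y (y' t) (Set.Ici t₀) t)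
    (hb : ∀ t ∈ Set.Icc a b, |y' t| ≤ L * β t) :
    |y b - y a| ≤ L * ∫ s in a..b, β s := by
  set γ : ℝ → ℝ := fun s => β (max s t₀)
  have hγ : Continuous γ := hβ.comp_continuous (by fun_prop) (fun s => Set.mem_Ici.2 (le_max_right _ _))
  have e : ∫ s in a..b, β s = ∫ s in a..b, γ s := by
    refine intervalIntegral.integral_congr fun s hs => ?_
    rw [Set.uIcc_of_le hab] at hs
    simp only [γ, max_eq_left (ha.trans hs.1)]
  rw [e]
  have hd : ∀ s, HasDerivAt (fun s => L * ∫ x in a..s, γ x) (L * γ s) s := fun s =>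
    (intervalIntegral.integral_hasDerivAt_right (hγ.intervalIntegrable _ _)
      (hγ.stronglyMeasurableAtFilter _ _) hγ.continuousAt).const_mul L
  have := image_norm_le_of_norm_deriv_right_le_deriv_boundary (f := fun s => y s - y a)
    (f' := y') (a := a) (b := b) (B := fun s => L * ∫ x in a..s, γ x) (B' := fun s => L * γ s)
    (fun s hs => (((hy s (ha.trans hs.1)).continuousWithinAt.mono
      (fun z hz => ha.trans hz.1)).sub continuousWithinAt_const))
    (fun s hs => ((hy s (ha.trans hs.1)).mono (fun z hz => (ha.trans hs.1).trans hz)).sub_const _)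
    (by simp) hd
    (fun s hs => by
      have := hb s ⟨hs.1, hs.2.le⟩
      simpa only [γ, max_eq_left (ha.trans hs.1), Real.norm_eq_abs] using this)
    (x := b) ⟨hab, le_rfl⟩
  simpa using this


/-- A solution of the Nicholson equation
`x'(t) = β(t)(Σ_j p_j x(t−τ_j(t)) e^{−a_j x(t−σ_j(t))} − δ x(t))`, `t ≥ t₀`,
defined on `[t₀ − τbar, ∞)`, with admissible initial data. -/
def NicholsonSolution (m : ℕ) (p a : Fin m → ℝ) (δ t₀ τbar : ℝ)
    (β : ℝ → ℝ) (τ σ : Fin m → ℝ → ℝ) (x : ℝ → ℝ) : Prop :=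
  ContinuousOn x (Set.Ici (t₀ - τbar)) ∧
  (∀ t ∈ Set.Ici t₀, HasDerivWithinAt x
      (β t * ((∑ j, p j * x (t - τ j t) * Real.exp (-(a j) * x (t - σ j t))) - δ * x t))
      (Set.Ici t₀) t) ∧
  (∀ s, t₀ - τbar ≤ s → s < t₀ → 0 ≤ x s) ∧
  0 < x t₀

/- STATEMENT 3 (Theorem 2.2): if p := Σ_j p_j > δ and
   limsup_{t→∞} Σ_j a_j p_j e^{−a_j K} ∫_{t−σ_j(t)}^t β(s) ds
     < (Σ_j a_j p_j e^{−a_j K}) / (2δ + K Σ_j a_j p_j e^{−a_j K}),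
   then the positive equilibrium K is locally exponentially stable. -/
set_option maxHeartbeats 4000000 in
theorem nicholson_local_exponential_stability
    (m : ℕ) (hm : 1 ≤ m) (p a : Fin m → ℝ)
    (hp : ∀ j, 0 < p j) (ha : ∀ j, 0 < a j) (δ : ℝ) (hδ : 0 < δ)
    (t₀ : ℝ) (β : ℝ → ℝ) (τ σ : Fin m → ℝ → ℝ)
    (hβc : ContinuousOn β (Set.Ici t₀))
    (hτc : ∀ j, ContinuousOn (τ j) (Set.Ici t₀))
    (hσc : ∀ j, ContinuousOn (σ j) (Set.Ici t₀))
    (hτ0 : ∀ j, ∀ t ∈ Set.Ici t₀, 0 ≤ τ j t)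
    (hσ0 : ∀ j, ∀ t ∈ Set.Ici t₀, 0 ≤ σ j t)
    (βminus : ℝ) (hβminus : IsGLB (β '' Set.Ici t₀) βminus) (hβmpos : 0 < βminus)
    (hβub : ∃ B, ∀ t ∈ Set.Ici t₀, β t ≤ B)
    (τbar : ℝ)
    (hτbar : IsLUB ((⋃ j, τ j '' Set.Ici t₀) ∪ ⋃ j, σ j '' Set.Ici t₀) τbar)
    -- p > δ and K is the positive equilibrium
    (hpδ : δ < ∑ j, p j)
    (K : ℝ) (hK0 : 0 < K) (hK : ∑ j, p j * Real.exp (-(a j) * K) = δ)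
    -- the stability condition (2.4)
    (hcond : Filter.limsup
        (fun t => ∑ j, a j * p j * Real.exp (-(a j) * K) * ∫ s in (t - σ j t)..t, β s)
        Filter.atTop
      < (∑ j, a j * p j * Real.exp (-(a j) * K)) /
          (2 * δ + K * ∑ j, a j * p j * Real.exp (-(a j) * K))) :
    -- K is locally exponentially stable
    ∃ ε > 0, ∃ M ≥ (1 : ℝ), ∃ lam > 0, ∀ x : ℝ → ℝ,
      NicholsonSolution m p a δ t₀ τbar β τ σ x →
      sSup ((fun s => |x s - K|) '' Set.Icc (t₀ - τbar) t₀) ≤ ε →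
      ∀ t ∈ Set.Ici t₀, |x t - K| ≤
        M * Real.exp (-lam * (t - t₀)) *
          sSup ((fun s => |x s - K|) '' Set.Icc (t₀ - τbar) t₀) := by
  classical
  obtain ⟨B, hB⟩ := hβub
  have hβlow : ∀ t ∈ Set.Ici t₀, βminus ≤ β t := fun t ht => hβminus.1 ⟨t, ht, rfl⟩
  have hτle : ∀ j, ∀ t ∈ Set.Ici t₀, τ j t ≤ τbar := fun j t ht =>
    hτbar.1 (Or.inl (Set.mem_iUnion.2 ⟨j, t, ht, rfl⟩))
  have hσle : ∀ j, ∀ t ∈ Set.Ici t₀, σ j t ≤ τbar := fun j t ht =>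
    hτbar.1 (Or.inr (Set.mem_iUnion.2 ⟨j, t, ht, rfl⟩))
  have ht₀ : t₀ ∈ Set.Ici t₀ := Set.self_mem_Ici
  have hτb0 : 0 ≤ τbar := (hτ0 ⟨0, hm⟩ t₀ ht₀).trans (hτle _ t₀ ht₀)
  have hB0 : 0 < B := hβmpos.trans_le ((hβlow _ ht₀).trans (hB _ ht₀))
  set c : Fin m → ℝ := fun j => a j * p j * Real.exp (-(a j) * K) with hc
  have hc0 : ∀ j, 0 < c j := fun j => mul_pos (mul_pos (ha j) (hp j)) (Real.exp_pos _)
  set b : Fin m → ℝ := fun j => p j * Real.exp (-(a j) * K) with hb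
  have hb0 : ∀ j, 0 < b j := fun j => mul_pos (hp j) (Real.exp_pos _)
  set C : ℝ := ∑ j, c j with hC
  have hC0 : 0 ≤ C := Finset.sum_nonneg fun j _ => (hc0 j).le
  have hΛ0 : 0 < 2 * δ + K * C := by positivity
  set Λ : ℝ := 2 * δ + K * C with hΛ
  have hsub : ∀ j t, t₀ + τbar ≤ t → t₀ ≤ t - σ j t ∧ t - σ j t ≤ t := by
    intro j t ht
    have h1 := hσle j t (by simp; linarith)
    have h2 := hσ0 j t (by simp; linarith)
    constructor <;> linarith
  have hintb : ∀ j t, t₀ + τbar ≤ t → |∫ s in (t - σ j t)..t, β s| ≤ B * τbar := by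
    intro j t ht
    obtain ⟨h1, h2⟩ := hsub j t ht
    have := intervalIntegral.norm_integral_le_of_norm_le_const (a := t - σ j t) (b := t)
      (f := β) (C := B) (fun s hs => by
        rw [Set.uIoc_of_le h2] at hs
        have hs0 : s ∈ Set.Ici t₀ := h1.trans hs.1.le
        rw [Real.norm_eq_abs, abs_of_nonneg (hβmpos.le.trans (hβlow s hs0))]
        exact hB s hs0)
    rw [Real.norm_eq_abs] at this
    refine this.trans ?_
    rw [abs_of_nonneg (by linarith)]
    have h3 := hσle j t (by simp; linarith)
    exact mul_le_mul_of_nonneg_left (by linarith) hB0.le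
  have hint0 : ∀ j t, t₀ + τbar ≤ t → 0 ≤ ∫ s in (t - σ j t)..t, β s := by
    intro j t ht
    obtain ⟨h1, h2⟩ := hsub j t ht
    exact intervalIntegral.integral_nonneg h2 fun s hs =>
      hβmpos.le.trans (hβlow s (h1.trans hs.1))
  obtain ⟨q, hq1, hq2⟩ := exists_between hcond
  have hev := Filter.eventually_lt_of_limsup_lt hq1 (by
    refine ⟨∑ j, c j * (B * τbar), ?_⟩
    rw [Filter.eventually_map]
    filter_upwards [Filter.eventually_ge_atTop (t₀ + τbar)] with t ht
    exact Finset.sum_le_sum fun j _ =>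
      mul_le_mul_of_nonneg_left ((le_abs_self _).trans (hintb j t ht)) (hc0 j).le)
  obtain ⟨T', hT'⟩ := Filter.eventually_atTop.1 hev
  set T : ℝ := max T' (t₀ + 2 * τbar) with hT
  have hTT' : T' ≤ T := le_max_left _ _
  have hTt₀ : t₀ + 2 * τbar ≤ T := le_max_right _ _
  have hq : ∀ t, T ≤ t → ∑ j, c j * ∫ s in (t - σ j t)..t, β s ≤ q := fun t ht =>
    (hT' t (hTT'.trans ht)).le
  have hq0 : 0 ≤ q := (Finset.sum_nonneg fun j _ => mul_nonneg (hc0 j).le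
    (hint0 j T (by linarith))).trans (hq T le_rfl)
  have hqΛ : q * Λ < C := (lt_div_iff₀ hΛ0).1 hq2
  obtain ⟨lam, hlam0, hlam1, hF⟩ : ∃ lam : ℝ, 0 < lam ∧ lam ≤ 1 ∧
      Real.exp (2 * lam * τbar) * (δ + K * (Λ + lam) * q + lam) - (δ + K * C)
        + lam / βminus < 0 := by
    have hcont : Continuous (fun lam : ℝ =>
      Real.exp (2 * lam * τbar) * (δ + K * (Λ + lam) * q + lam) - (δ + K * C)
        + lam / βminus) := by fun_prop
    have h0 : (fun lam : ℝ =>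
      Real.exp (2 * lam * τbar) * (δ + K * (Λ + lam) * q + lam) - (δ + K * C)
        + lam / βminus) 0 < 0 := by
      simp only [mul_zero, zero_mul, Real.exp_zero, add_zero, zero_div, one_mul]
      nlinarith
    have h1 := (hcont.continuousAt.eventually_lt continuousAt_const h0).filter_mono
      (nhdsWithin_le_nhds (s := Set.Ioi 0))
    obtain ⟨lam, h2, h3⟩ := (h1.and (Ioc_mem_nhdsGT (zero_lt_one' ℝ))).exists
    exact ⟨lam, h3.1, h3.2, h2⟩
  set E : ℝ := Real.exp (2 * lam * τbar) with hE
  have hE1 : 1 ≤ E := Real.one_le_exp (by positivity)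
  set Q : ℝ := ∑ j, b j * (K * a j ^ 2 + 2 * a j) with hQ
  have hQ0 : 0 ≤ Q := Finset.sum_nonneg fun j _ => by
    have := hb0 j; have := ha j; positivity
  obtain ⟨r, hr0, hrQ, hra⟩ : ∃ r : ℝ, 0 < r ∧ Q * r ≤ lam ∧ ∀ j, a j * r ≤ 1 := by
    have hA0 : 0 ≤ ∑ j, a j := Finset.sum_nonneg fun j _ => (ha j).le
    refine ⟨min (lam / (Q + 1)) (1 / ((∑ j, a j) + 1)), by positivity, ?_, fun j => ?_⟩
    · calc Q * _ ≤ (Q + 1) * (lam / (Q + 1)) :=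
            mul_le_mul (by linarith) (min_le_left _ _) (by positivity) (by positivity)
        _ = lam := by field_simp
    · have : a j ≤ ∑ j, a j := Finset.single_le_sum (fun j _ => (ha j).le) (Finset.mem_univ j)
      calc a j * _ ≤ ((∑ j, a j) + 1) * (1 / ((∑ j, a j) + 1)) :=
            mul_le_mul (by linarith) (min_le_right _ _) (by positivity) (by positivity)
        _ = 1 := by field_simp
  set L : ℝ := B * (Λ + lam) + 1 with hL
  have hL0 : 0 < L := by positivity
  set D : ℝ := Real.exp (L * (T - t₀)) with hD
  have hD1 : 1 ≤ D := Real.one_le_exp (mul_nonneg hL0.le (by linarith))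
  have hDE : 0 < D * E := by positivity
  set ε : ℝ := r / (2 * (D * E)) with hε
  have hε0 : 0 < ε := by positivity
  refine ⟨ε, hε0, D * Real.exp (lam * (T - t₀)), ?_, lam, hlam0, ?_⟩
  · exact one_le_mul_of_one_le_of_one_le hD1 (Real.one_le_exp (mul_nonneg hlam0.le (by linarith)))
  intro x hx hsup
  obtain ⟨hxc, hxd, -, -⟩ := hx
  set N : ℝ := sSup ((fun s => |x s - K|) '' Set.Icc (t₀ - τbar) t₀) with hN
  have hNle : ∀ s ∈ Set.Icc (t₀ - τbar) t₀, |x s - K| ≤ N := by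
    intro s hs
    refine le_csSup ?_ ⟨s, hs, rfl⟩
    refine (isCompact_Icc.image_of_continuousOn ?_).bddAbove
    exact ((hxc.mono (fun z hz => hz.1)).sub continuousOn_const).abs
  have hN0 : 0 ≤ N := (abs_nonneg _).trans (hNle t₀ ⟨by linarith, le_rfl⟩)
  set G : ℝ → ℝ := fun t =>
    (∑ j, p j * x (t - τ j t) * Real.exp (-(a j) * x (t - σ j t))) - δ * x t with hG
  have hyd : ∀ t ∈ Set.Ici t₀, HasDerivWithinAt (fun t => x t - K) (β t * G t) (Set.Ici t₀) t :=
    fun t ht => (hxd t ht).sub_const _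
  have hyd' : ∀ t, t₀ < t → HasDerivAt (fun t => x t - K) (β t * G t) t :=
    fun t ht => (hyd t ht.le).hasDerivAt (Ici_mem_nhds ht)
  -- basic estimates
  have hest : ∀ t, t₀ ≤ t → ∀ S, S ≤ r → (∀ s ∈ Set.Icc (t - τbar) t, |x s - K| ≤ S) →
      |∑ j, b j * (x (t - τ j t) - K)| ≤ δ * S ∧
      |∑ j, c j * (x (t - σ j t) - K)| ≤ C * S ∧
      |G t - ((∑ j, b j * (x (t - τ j t) - K)) - K * (∑ j, c j * (x (t - σ j t) - K))
        - δ * (x t - K))| ≤ lam * S := by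
    intro t ht S hS hs
    have hS0 : 0 ≤ S := (abs_nonneg _).trans (hs t ⟨by linarith, le_rfl⟩)
    have hu : ∀ j, |x (t - τ j t) - K| ≤ S := fun j =>
      hs _ ⟨by linarith [hτle j t ht], by linarith [hτ0 j t ht]⟩
    have hv : ∀ j, |x (t - σ j t) - K| ≤ S := fun j =>
      hs _ ⟨by linarith [hσle j t ht], by linarith [hσ0 j t ht]⟩
    refine ⟨?_, ?_, ?_⟩
    · rw [← hK, Finset.sum_mul]
      refine (Finset.abs_sum_le_sum_abs _ _).trans (Finset.sum_le_sum fun j _ => ?_)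
      rw [abs_mul, abs_of_pos (hb0 j)]
      exact mul_le_mul_of_nonneg_left (hu j) (hb0 j).le
    · rw [hC, Finset.sum_mul]
      refine (Finset.abs_sum_le_sum_abs _ _).trans (Finset.sum_le_sum fun j _ => ?_)
      rw [abs_mul, abs_of_pos (hc0 j)]
      exact mul_le_mul_of_nonneg_left (hv j) (hc0 j).le
    · exact (nich_rem m p a (fun j => x (t - τ j t)) (fun j => x (t - σ j t)) δ K S r (x t)
        hp ha hK0 hK hu hv hS hra).trans (mul_le_mul_of_nonneg_right hrQ hS0)
  have hGb : ∀ t, t₀ ≤ t → ∀ S, S ≤ r → (∀ s ∈ Set.Icc (t - τbar) t, |x s - K| ≤ S) →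
      |G t| ≤ (Λ + lam) * S := by
    intro t ht S hS hs
    obtain ⟨h1, h2, h3⟩ := hest t ht S hS hs
    have h4 := hs t ⟨by linarith, le_rfl⟩
    have h5 : δ * |x t - K| ≤ δ * S := mul_le_mul_of_nonneg_left h4 hδ.le
    have h6 : K * |∑ j, c j * (x (t - σ j t) - K)| ≤ K * (C * S) :=
      mul_le_mul_of_nonneg_left h2 hK0.le
    rw [← abs_of_pos hδ, ← abs_mul, abs_of_pos hδ] at h5
    rw [← abs_of_pos hK0, ← abs_mul, abs_of_pos hK0] at h6
    rw [abs_le] at *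
    rw [hΛ]
    constructor <;> linarith
  -- main claim with N' > N
  have main : ∀ N', N < N' → N' ≤ 2 * ε → ∀ t ∈ Set.Ici t₀,
      |x t - K| ≤ N' * D * Real.exp (-lam * (t - T)) := by
    intro N' hNN' hN'
    have hN'0 : 0 < N' := hN0.trans_lt hNN'
    have hWE : N' * D * E ≤ r := by
      calc N' * D * E = N' * (D * E) := by ring
        _ ≤ 2 * ε * (D * E) := mul_le_mul_of_nonneg_right hN' hDE.le
        _ = r := by rw [hε]; field_simp
    have hW : N' * D ≤ r := by
      refine le_trans ?_ hWE
      exact le_mul_of_one_le_right (by positivity) hE1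
    -- phase 1
    have ph1 : ∀ t ∈ Set.Icc t₀ T, |x t - K| < N' * Real.exp (L * (t - t₀)) := by
      refine nich_cross (fun t => x t - K) (fun t => N' * Real.exp (L * (t - t₀)))
        (fun t => β t * G t) (fun t => N' * (Real.exp (L * (t - t₀)) * L)) t₀ T ?_ (by fun_prop)
        hyd' ?_ ?_ ?_
      · exact (hxc.mono (fun z hz => by have := hz.1; simp; linarith)).sub continuousOn_const
      · intro t
        have : HasDerivAt (fun t => L * (t - t₀)) L t := by
          simpa using ((hasDerivAt_id t).sub_const t₀).const_mul L
        exact this.exp.const_mul N'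
      · simpa using (hNle t₀ ⟨by linarith, le_rfl⟩).trans_lt hNN'
      · intro t ht htT hs
        set w : ℝ := N' * Real.exp (L * (t - t₀)) with hw
        have hw0 : 0 < w := by positivity
        have hwr : w ≤ r := by
          refine le_trans ?_ hW
          refine mul_le_mul_of_nonneg_left (Real.exp_le_exp.2 ?_) hN'0.le
          exact mul_le_mul_of_nonneg_left (by linarith) hL0.le
        have hg := hGb t ht.le w hwr (by
          intro s hs1
          rcases le_total s t₀ with h | h
          · refine (hNle s ⟨by linarith [hs1.1], h⟩).trans (hNN'.le.trans ?_)
            exact le_mul_of_one_le_right hN'0.le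
              (Real.one_le_exp (mul_nonneg hL0.le (by linarith)))
          · refine (hs s ⟨h, hs1.2⟩).trans ?_
            refine mul_le_mul_of_nonneg_left (Real.exp_le_exp.2 ?_) hN'0.le
            exact mul_le_mul_of_nonneg_left (by linarith [hs1.2]) hL0.le)
        have hβ0 : 0 ≤ β t := hβmpos.le.trans (hβlow t ht.le)
        have h1 : |β t * G t| < N' * (Real.exp (L * (t - t₀)) * L) := by
          rw [abs_mul, abs_of_nonneg hβ0]
          calc β t * |G t| ≤ B * ((Λ + lam) * w) :=
                mul_le_mul (hB t ht.le) hg (abs_nonneg _) hB0.le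
            _ < L * w := by rw [hL]; nlinarith
            _ = _ := by rw [hw]; ring
        rw [abs_lt] at h1
        exact ⟨fun _ => h1.2, fun _ => by linarith [h1.1]⟩
    have hpast : ∀ s ∈ Set.Icc (t₀ - τbar) T, |x s - K| ≤ N' * D := by
      intro s hs
      rcases le_total s t₀ with h | h
      · exact (hNle s ⟨hs.1, h⟩).trans (hNN'.le.trans (le_mul_of_one_le_right hN'0.le hD1))
      · refine (ph1 s ⟨h, hs.2⟩).le.trans ?_
        refine mul_le_mul_of_nonneg_left (Real.exp_le_exp.2 ?_) hN'0.le
        exact mul_le_mul_of_nonneg_left (by linarith [hs.2]) hL0.le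
    have hpast' : ∀ s ∈ Set.Icc (t₀ - τbar) T,
        |x s - K| ≤ N' * D * Real.exp (-lam * (s - T)) := by
      intro s hs
      refine (hpast s hs).trans (le_mul_of_one_le_right (by positivity) (Real.one_le_exp ?_))
      nlinarith [hs.2]
    have ph2 : ∀ T1, ∀ t ∈ Set.Icc T T1, |x t - K| < N' * D * Real.exp (-lam * (t - T)) := by
      intro T1
      refine nich_cross (fun t => x t - K) (fun t => N' * D * Real.exp (-lam * (t - T)))
        (fun t => β t * G t) (fun t => N' * D * (Real.exp (-lam * (t - T)) * (-lam))) T T1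
        ?_ (by fun_prop) (fun t ht => hyd' t (by linarith)) ?_ ?_ ?_
      · exact (hxc.mono (fun z hz => by have := hz.1; simp; linarith)).sub continuousOn_const
      · intro t
        have : HasDerivAt (fun t => -lam * (t - T)) (-lam) t := by
          simpa using ((hasDerivAt_id t).sub_const T).const_mul (-lam)
        exact this.exp.const_mul (N' * D)
      · simpa using ph1 T ⟨by linarith, le_rfl⟩
      · intro t ht htT hs
        have htt₀ : t₀ ≤ t := by linarith
        set w : ℝ := N' * D * Real.exp (-lam * (t - T)) with hw
        have hw0 : 0 < w := by positivity
        have hwW : w ≤ N' * D := by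
          refine mul_le_of_le_one_right (by positivity) (Real.exp_le_one_iff.2 ?_)
          nlinarith
        set S : ℝ := w * E with hS
        have hSr : S ≤ r := (mul_le_mul_of_nonneg_right hwW (by positivity)).trans hWE
        have hS0 : 0 < S := by positivity
        have hwin : ∀ s ∈ Set.Icc (t - 2 * τbar) t, |x s - K| ≤ S := by
          intro s hs1
          have h1 : |x s - K| ≤ N' * D * Real.exp (-lam * (s - T)) := by
            rcases le_total s T with h | h
            · exact hpast' s ⟨by linarith [hs1.1], h⟩
            · exact hs s ⟨h, hs1.2⟩
          refine h1.trans ?_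
          rw [hS, hw, hE, mul_assoc (N' * D), ← Real.exp_add]
          refine mul_le_mul_of_nonneg_left (Real.exp_le_exp.2 ?_) (by positivity)
          nlinarith [hs1.1]
        have hinc : ∀ j, |(x t - K) - (x (t - σ j t) - K)|
            ≤ (Λ + lam) * S * ∫ s in (t - σ j t)..t, β s := by
          intro j
          obtain ⟨h1, h2⟩ := hsub j t (by linarith)
          refine nich_mv (fun t => x t - K) (fun t => β t * G t) β t₀ (t - σ j t) t _ h1 h2 hβc
            hyd ?_
          intro s hs1
          have hs0 : t₀ ≤ s := h1.trans hs1.1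
          have hβ0 : 0 ≤ β s := hβmpos.le.trans (hβlow s hs0)
          rw [abs_mul, abs_of_nonneg hβ0, mul_comm]
          refine mul_le_mul_of_nonneg_right (hGb s hs0 S hSr fun z hz => hwin z ⟨?_, ?_⟩) hβ0
          · linarith [hz.1, hs1.1, hσle j t htt₀]
          · linarith [hz.2, hs1.2]
        obtain ⟨h1, -, h3⟩ := hest t htt₀ S hSr (fun s hs1 => hwin s ⟨by linarith [hs1.1], hs1.2⟩)
        have h4 : |∑ j, c j * ((x t - K) - (x (t - σ j t) - K))| ≤ (Λ + lam) * S * q := by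
          calc _ ≤ ∑ j, c j * ((Λ + lam) * S * ∫ s in (t - σ j t)..t, β s) := by
                refine (Finset.abs_sum_le_sum_abs _ _).trans (Finset.sum_le_sum fun j _ => ?_)
                rw [abs_mul, abs_of_pos (hc0 j)]
                exact mul_le_mul_of_nonneg_left (hinc j) (hc0 j).le
            _ = (Λ + lam) * S * ∑ j, c j * ∫ s in (t - σ j t)..t, β s := by
                rw [Finset.mul_sum]; exact Finset.sum_congr rfl fun j _ => by ring
            _ ≤ _ := mul_le_mul_of_nonneg_left (hq t ht.le) (by positivity)
        have h5 : ∑ j, c j * ((x t - K) - (x (t - σ j t) - K))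
            = C * (x t - K) - ∑ j, c j * (x (t - σ j t) - K) := by
          rw [hC, Finset.sum_mul, ← Finset.sum_sub_distrib]
          exact Finset.sum_congr rfl fun j _ => by ring
        rw [h5] at h4
        have h6 : K * |C * (x t - K) - ∑ j, c j * (x (t - σ j t) - K)|
            ≤ K * ((Λ + lam) * S * q) := mul_le_mul_of_nonneg_left h4 hK0.le
        rw [← abs_of_pos hK0, ← abs_mul, abs_of_pos hK0] at h6
        have h7 : |G t + (δ + K * C) * (x t - K)| ≤ S * (δ + K * (Λ + lam) * q + lam) := by
          rw [abs_le] at h1 h3 h6 ⊢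
          constructor <;> linarith
        have h8 : S * (δ + K * (Λ + lam) * q + lam) < (δ + K * C) * w - w * (lam / βminus) := by
          have := mul_neg_of_pos_of_neg hw0 hF
          rw [hS]; linarith
        have hβl := hβlow t htt₀
        have h9 : w * lam ≤ β t * (w * (lam / βminus)) := by
          calc w * lam = βminus * (w * (lam / βminus)) := by field_simp
            _ ≤ _ := mul_le_mul_of_nonneg_right hβl (by positivity)
        have hβ0 : 0 < β t := hβmpos.trans_le hβl
        have h10 : N' * D * (Real.exp (-lam * (t - T)) * (-lam)) = - (w * lam) := by
          rw [hw]; ring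
        rw [abs_le] at h7
        refine ⟨fun h => ?_, fun h => ?_⟩
        · have h : x t - K = w := h
          rw [h] at h7
          have : G t < - (w * (lam / βminus)) := by linarith [h7.2]
          have := mul_lt_mul_of_pos_left this hβ0
          simp only [h10]; linarith
        · have h : x t - K = -w := h
          rw [h] at h7
          have : w * (lam / βminus) < G t := by linarith [h7.1]
          have := mul_lt_mul_of_pos_left this hβ0
          simp only [h10]; linarith
    intro t ht
    rcases le_total t T with h | h
    · exact hpast' t ⟨by have : t₀ ≤ t := ht
                         linarith, h⟩
    · exact (ph2 t t ⟨h, le_rfl⟩).le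
  intro t ht
  have hlim : |x t - K| ≤ N * D * Real.exp (-lam * (t - T)) := by
    have hc : Continuous (fun N' : ℝ => N' * D * Real.exp (-lam * (t - T))) := by fun_prop
    refine ge_of_tendsto (hc.continuousAt.tendsto.mono_left
      (nhdsWithin_le_nhds (a := N) (s := Set.Ioi N))) ?_
    filter_upwards [Ioo_mem_nhdsGT (show N < 2 * ε by linarith)] with N' hN'
    exact main N' hN'.1 hN'.2.le t ht
  refine hlim.trans (le_of_eq ?_)
  have : Real.exp (-lam * (t - T)) = Real.exp (lam * (T - t₀)) * Real.exp (-lam * (t - t₀)) := by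
    rw [← Real.exp_add]; ring_nf
  rw [this]; ring
end

section
/- (Corollary 2.1.) Assume p := Σ_{j=1}^m p_j > δ, let K > 0 satisfy Σ_j p_j e^{−a_j K} = δ, and set ζ_M := max_{1≤j≤m} limsup_{t→∞} ∫_{t−σ_j(t)}^{t} β(s) ds and a⁺ := max_j a_j. If ζ_M < 1/(2δ + K Σ_{j=1}^m p_j a_j e^{−a_j K}), then K is locally exponentially stable for the Nicholson equation; in particular, this holds whenever ζ_M < 1/(δ(2 + a⁺K)). -/
/-- The positive equilibrium `K` is locally exponentially stable for the
Nicholson equation. -/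
def LocallyExpStable (m : ℕ) (p a : Fin m → ℝ) (δ t₀ τbar : ℝ)
    (β : ℝ → ℝ) (τ σ : Fin m → ℝ → ℝ) (K : ℝ) : Prop :=
  ∃ ε > 0, ∃ M ≥ (1 : ℝ), ∃ lam > 0, ∀ x : ℝ → ℝ,
    NicholsonSolution m p a δ t₀ τbar β τ σ x →
    sSup ((fun s => |x s - K|) '' Set.Icc (t₀ - τbar) t₀) ≤ ε →
    ∀ t ∈ Set.Ici t₀, |x t - K| ≤
      M * Real.exp (-lam * (t - t₀)) *
        sSup ((fun s => |x s - K|) '' Set.Icc (t₀ - τbar) t₀)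

section

open Set Filter Topology

lemma nich_exists_pos (f : ℝ → ℝ) (hf : Continuous f) (h0 : f 0 < 0) : ∃ x > 0, f x < 0 := by
  have h : ∀ᶠ x in 𝓝[>] (0:ℝ), f x < 0 :=
    ((hf.tendsto 0).eventually (gt_mem_nhds h0)).filter_mono nhdsWithin_le_nhds
  obtain ⟨x, hx, hx'⟩ := (h.and self_mem_nhdsWithin).exists
  exact ⟨x, hx', hx⟩

/-- comparison of derivatives at a touching point -/
lemma nich_touch (y h : ℝ → ℝ) (y' h' t₀ a t : ℝ) (hat : a < t) (ha : t₀ ≤ a)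
    (hy : HasDerivWithinAt y y' (Ici t₀) t) (hh : HasDerivAt h h' t)
    (hle : ∀ s ∈ Icc a t, y s ≤ h s) (heq : y t = h t) : h' ≤ y' := by
  have hy1 : HasDerivAt y y' t := hy.hasDerivAt (Ici_mem_nhds (lt_of_le_of_lt ha hat))
  have hd : HasDerivWithinAt (fun s => h s - y s) (h' - y') (Iio t) t :=
    (hh.sub hy1).hasDerivWithinAt
  have ht := hasDerivWithinAt_iff_tendsto_slope.mp hd
  have hI : Iio t \ {t} = Iio t := by ext; simp
  rw [hI] at ht
  have : h' - y' ≤ 0 := by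
    refine le_of_tendsto ht ?_
    have : Ioo a t ∈ 𝓝[<] t := Ioo_mem_nhdsLT hat
    filter_upwards [this] with s hs
    rw [slope_def_field]
    have h1 := hle s ⟨hs.1.le, hs.2.le⟩
    apply div_nonpos_of_nonneg_of_nonpos
    · linarith
    · linarith [hs.2]
  linarith

lemma nich_cross_s4 (y h : ℝ → ℝ) (a b : ℝ) (hyc : ContinuousOn y (Icc a b)) (hhc : Continuous h)
    (h0 : |y a| < h a)
    (hstep : ∀ t ∈ Ioc a b, (∀ s ∈ Icc a t, |y s| ≤ h s) → |y t| = h t → False) :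
    ∀ t ∈ Icc a b, |y t| < h t := by
  by_contra hcon
  push Not at hcon
  obtain ⟨t1, ht1, ht1'⟩ := hcon
  set S : Set ℝ := Icc a b ∩ (fun s => |y s| - h s) ⁻¹' Ici 0 with hS
  have hSc : IsClosed S :=
    (hyc.abs.sub hhc.continuousOn).preimage_isClosed_of_isClosed isClosed_Icc isClosed_Ici
  have hne : S.Nonempty := ⟨t1, ht1, by simpa using ht1'⟩
  have hbd : BddBelow S := ⟨a, fun s hs => hs.1.1⟩
  have hmem := hSc.csInf_mem hne hbd
  set t := sInf S with ht
  have hlt : ∀ s, a ≤ s → s < t → |y s| < h s := by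
    intro s hs hst
    by_contra hc
    have : s ∈ S := ⟨⟨hs, hst.le.trans hmem.1.2⟩, by simpa using hc⟩
    exact absurd (csInf_le hbd this) (not_le.mpr hst)
  have hge : h t ≤ |y t| := by simpa using hmem.2
  have hat : a < t := by
    rcases hmem.1.1.lt_or_eq with h1 | h1
    · exact h1
    · rw [← h1] at hge; linarith
  have hle : |y t| ≤ h t := by
    have hc : ContinuousWithinAt (fun s => h s - |y s|) (Ico a t) t :=
      ((hhc.continuousOn.sub hyc.abs) t hmem.1).mono
        (fun s hs => ⟨hs.1, hs.2.le.trans hmem.1.2⟩)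
    have hcl : t ∈ closure (Ico a t) := by
      rw [closure_Ico hat.ne]; exact right_mem_Icc.mpr hat.le
    have : h t - |y t| ∈ closure (Ici (0:ℝ)) :=
      hc.mem_closure hcl (fun s hs => by
        have := hlt s hs.1 hs.2
        simp; linarith)
    rw [isClosed_Ici.closure_eq] at this
    simpa using this
  refine hstep t ⟨hat, hmem.1.2⟩ ?_ (le_antisymm hle hge)
  intro s hs
  rcases hs.2.lt_or_eq with h1 | h1
  · exact (hlt s hs.1 h1).le
  · rw [h1]; exact hle

/-- mean value estimate -/
lemma nich_mean (y y' β : ℝ → ℝ) (t₀ R u t : ℝ) (hβ : Continuous β)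
    (hu : t₀ ≤ u) (hut : u ≤ t)
    (hy : ∀ s ≥ t₀, HasDerivWithinAt y (y' s) (Ici t₀) s)
    (hb : ∀ s ∈ Icc u t, y' s ≤ β s * R) :
    y t - y u ≤ R * ∫ s in u..t, β s := by
  have hB : ∀ x, HasDerivAt (fun s => y u + R * ∫ v in u..s, β v) (R * β x) x := fun x =>
    ((hβ.integral_hasStrictDerivAt u x).hasDerivAt.const_mul R).const_add _
  have := image_le_of_deriv_right_le_deriv_boundary (f := y) (f' := y') (a := u) (b := t)
    (B := fun s => y u + R * ∫ v in u..s, β v) (B' := fun x => R * β x)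
    (fun s hs => ((hy s (hu.trans hs.1)).continuousWithinAt).mono
      (fun z hz => hu.trans hz.1))
    (fun s hs => (hy s (hu.trans hs.1)).mono (fun z hz => (hu.trans hs.1).trans hz))
    (by simp)
    (fun s hs => (hB s).continuousAt.continuousWithinAt)
    (fun s hs => (hB s).hasDerivWithinAt)
    (fun s hs => by have := hb s ⟨hs.1, hs.2.le⟩; linarith)
    (right_mem_Icc.mpr hut)
  linarith

lemma nich_lin_bound {m : ℕ} (c d u v : Fin m → ℝ) (hc : ∀ j, 0 ≤ c j) (hd : ∀ j, 0 ≤ d j)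
    (z r η W : ℝ) (hu : ∀ j, |u j| ≤ W) (hv : ∀ j, |v j| ≤ W) (hz : |z| ≤ W) (hr : |r| ≤ η * W) :
    |∑ j, c j * u j - ∑ j, d j * v j - (∑ j, c j) * z + r|
      ≤ (2 * (∑ j, c j) + ∑ j, d j + η) * W := by
  have h1 : |∑ j, c j * u j| ≤ (∑ j, c j) * W := by
    rw [Finset.sum_mul]
    refine (Finset.abs_sum_le_sum_abs _ _).trans (Finset.sum_le_sum fun j _ => ?_)
    rw [abs_mul, abs_of_nonneg (hc j)]
    exact mul_le_mul_of_nonneg_left (hu j) (hc j)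
  have h2 : |∑ j, d j * v j| ≤ (∑ j, d j) * W := by
    rw [Finset.sum_mul]
    refine (Finset.abs_sum_le_sum_abs _ _).trans (Finset.sum_le_sum fun j _ => ?_)
    rw [abs_mul, abs_of_nonneg (hd j)]
    exact mul_le_mul_of_nonneg_left (hv j) (hd j)
  have h3 : |(∑ j, c j) * z| ≤ (∑ j, c j) * W := by
    have : 0 ≤ ∑ j, c j := Finset.sum_nonneg fun j _ => hc j
    rw [abs_mul, abs_of_nonneg this]
    exact mul_le_mul_of_nonneg_left hz this
  rw [abs_le] at *
  constructor <;> nlinarith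

lemma nich_step {m : ℕ} (c d : Fin m → ℝ) (hc : ∀ j, 0 ≤ c j) (hd : ∀ j, 0 ≤ d j)
    (β : ℝ → ℝ) (hβ : Continuous β) (τ σ : Fin m → ℝ → ℝ) (t₀ T T1 ζ η q : ℝ)
    (hβ0 : ∀ t ≥ t₀, 0 ≤ β t)
    (hη : 0 ≤ η) (hq : 0 ≤ q)
    (hτ0 : ∀ j, ∀ t ≥ t₀, 0 ≤ τ j t) (hσ0 : ∀ j, ∀ t ≥ t₀, 0 ≤ σ j t)
    (hτT : ∀ j, ∀ t ≥ t₀, τ j t ≤ T) (hσT : ∀ j, ∀ t ≥ t₀, σ j t ≤ T) (hT : 0 ≤ T)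
    (hT1 : t₀ + T ≤ T1) (hζ : ∀ t ≥ T1, ∀ j, ∫ s in (t - σ j t)..t, β s ≤ ζ)
    (y r : ℝ → ℝ)
    (hy : ∀ t ≥ t₀, HasDerivWithinAt y (β t * (∑ j, c j * y (t - τ j t) - ∑ j, d j * y (t - σ j t)
      - (∑ j, c j) * y t + r t)) (Ici t₀) t)
    (t H : ℝ) (ht : T1 ≤ t) (hH : 0 < H) (hyt : y t = H)
    (hyH : ∀ s ∈ Icc (t - 2 * T) t, |y s| ≤ q * H)
    (hr : ∀ s ∈ Icc (t - T) t, |r s| ≤ η * (q * H)) :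
    ∑ j, c j * y (t - τ j t) - ∑ j, d j * y (t - σ j t) - (∑ j, c j) * y t + r t
      ≤ ((∑ j, c j) * (q - 1) + η * q
        - (∑ j, d j) * (1 - ζ * (2 * (∑ j, c j) + (∑ j, d j) + η) * q)) * H := by
  set C := ∑ j, c j with hC
  set D := ∑ j, d j with hD
  have hC0 : 0 ≤ C := Finset.sum_nonneg fun j _ => hc j
  have hD0 : 0 ≤ D := Finset.sum_nonneg fun j _ => hd j
  have htt : t₀ ≤ t := by linarith
  set R := (2 * C + D + η) * (q * H) with hR
  have hR0 : 0 ≤ R := by positivity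
  have h1 : ∑ j, c j * y (t - τ j t) ≤ C * (q * H) := by
    rw [hC, Finset.sum_mul]
    refine Finset.sum_le_sum fun j _ => mul_le_mul_of_nonneg_left ?_ (hc j)
    exact (le_abs_self _).trans (hyH _ ⟨by linarith [hτT j t htt], by linarith [hτ0 j t htt]⟩)
  have h2 : D * (H - R * ζ) ≤ ∑ j, d j * y (t - σ j t) := by
    rw [hD, Finset.sum_mul]
    refine Finset.sum_le_sum fun j _ => mul_le_mul_of_nonneg_left ?_ (hd j)
    have hs0 := hσ0 j t htt
    have hsT := hσT j t htt
    have := nich_mean y _ β t₀ R (t - σ j t) t hβ (by linarith) (by linarith) hy (by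
      intro s hs
      have hs1 : t₀ ≤ s := by linarith [hs.1]
      refine mul_le_mul_of_nonneg_left ?_ (hβ0 s hs1)
      refine (le_abs_self _).trans ?_
      have hst : t - T ≤ s := by linarith [hs.1]
      refine nich_lin_bound c d _ _ hc hd _ _ _ _ ?_ ?_ ?_ ?_
      · exact fun j => hyH _ ⟨by linarith [hτT j s hs1], by linarith [hτ0 j s hs1, hs.2]⟩
      · exact fun j => hyH _ ⟨by linarith [hσT j s hs1], by linarith [hσ0 j s hs1, hs.2]⟩
      · exact hyH _ ⟨by linarith, hs.2⟩
      · exact hr _ ⟨hst, hs.2⟩)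
    have h3 := mul_le_mul_of_nonneg_left (hζ t ht j) hR0
    linarith
  have h4 : r t ≤ η * (q * H) := (le_abs_self _).trans (hr t ⟨by linarith, le_rfl⟩)
  rw [hyt]
  have : D * (H - R * ζ) = D * (1 - ζ * (2 * C + D + η) * q) * H := by rw [hR]; ring
  nlinarith

set_option maxHeartbeats 2000000 in
lemma nich_abstract {m : ℕ} (c d : Fin m → ℝ) (hc : ∀ j, 0 ≤ c j) (hd : ∀ j, 0 ≤ d j)
    (hD0 : 0 < ∑ j, d j)
    (β : ℝ → ℝ) (hβ : Continuous β) (τ σ : Fin m → ℝ → ℝ) (t₀ T T1 ζ b B : ℝ)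
    (hb : 0 < b) (hβb : ∀ t ≥ t₀, b ≤ β t) (hβB : ∀ t ≥ t₀, β t ≤ B)
    (hτ0 : ∀ j, ∀ t ≥ t₀, 0 ≤ τ j t) (hσ0 : ∀ j, ∀ t ≥ t₀, 0 ≤ σ j t)
    (hτT : ∀ j, ∀ t ≥ t₀, τ j t ≤ T) (hσT : ∀ j, ∀ t ≥ t₀, σ j t ≤ T) (hT : 0 ≤ T)
    (hT1 : t₀ + T ≤ T1) (hζ : ∀ t ≥ T1, ∀ j, ∫ s in (t - σ j t)..t, β s ≤ ζ)
    (hζ1 : ζ * (2 * (∑ j, c j) + ∑ j, d j) < 1) :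
    ∃ η > 0, ∀ ε₀ > 0, ∃ ε > 0, ∃ M ≥ (1:ℝ), ∃ lam > 0, ∀ (y r : ℝ → ℝ) (S : ℝ),
      ContinuousOn y (Ici (t₀ - T)) →
      (∀ t ≥ t₀, HasDerivWithinAt y (β t * (∑ j, c j * y (t - τ j t)
        - ∑ j, d j * y (t - σ j t) - (∑ j, c j) * y t + r t)) (Ici t₀) t) →
      (∀ t ≥ t₀, ∀ W ≤ ε₀, (∀ s ∈ Icc (t - T) t, |y s| ≤ W) → |r t| ≤ η * W) →
      0 < S → S < 2 * ε → (∀ s ∈ Icc (t₀ - T) t₀, |y s| < S) →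
      ∀ t ≥ t₀, |y t| ≤ M * Real.exp (-lam * (t - t₀)) * S := by
  set C := ∑ j, c j with hC
  set D := ∑ j, d j with hD
  have hC0 : 0 ≤ C := Finset.sum_nonneg fun j _ => hc j
  have hB : 0 < B := hb.trans_le ((hβb t₀ le_rfl).trans (hβB t₀ le_rfl))
  obtain ⟨η, hη, hη1⟩ := nich_exists_pos (fun η => η - D * (1 - ζ * (2 * C + D + η)))
    (by fun_prop) (by simp; nlinarith)
  obtain ⟨lam, hlam, hlam1⟩ := nich_exists_pos
    (fun l => (C * (Real.exp (2 * l * T) - 1) + η * Real.exp (2 * l * T)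
      - D * (1 - ζ * (2 * C + D + η) * Real.exp (2 * l * T))) + l / b)
    (by fun_prop) (by simpa using hη1)
  set q := Real.exp (2 * lam * T) with hq
  have hq1 : 1 ≤ q := Real.one_le_exp (by positivity)
  refine ⟨η, hη, fun ε₀ hε₀ => ?_⟩
  set L := B * (2 * C + D + η) + 1 with hL
  have hL0 : 0 < L := by positivity
  set Q := Real.exp (L * (T1 - t₀)) with hQ
  have hQ1 : 1 ≤ Q := Real.one_le_exp (by
    have : 0 ≤ T1 - t₀ := by linarith
    positivity)
  refine ⟨ε₀ / (2 * Q * q), by positivity, Q * Real.exp (lam * (T1 - t₀)), ?_, lam, hlam, ?_⟩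
  · have : 1 ≤ Real.exp (lam * (T1 - t₀)) := Real.one_le_exp (by
      have : 0 ≤ T1 - t₀ := by linarith
      positivity)
    nlinarith
  intro y r S hyc hy hr hS hSε hS0
  have hSQq : S * Q * q ≤ ε₀ := by
    have : 2 * (ε₀ / (2 * Q * q)) * (Q * q) = ε₀ := by field_simp
    nlinarith [mul_lt_mul_of_pos_right hSε (by positivity : 0 < Q * q)]
  have hSQ : S * Q ≤ ε₀ := by nlinarith [mul_pos hS (by linarith : 0 < Q)]
  have hyt0 : |y t₀| < S := hS0 t₀ ⟨by linarith, le_rfl⟩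
  -- phase 1
  have hg : ∀ t, HasDerivAt (fun t => S * Real.exp (L * (t - t₀)))
      (L * (S * Real.exp (L * (t - t₀)))) t := by
    intro t
    have := ((((hasDerivAt_id t).sub_const t₀).const_mul L).exp).const_mul S
    refine this.congr_deriv ?_
    simp only [id]; ring
  have ph1 : ∀ t ∈ Icc t₀ T1, |y t| < S * Real.exp (L * (t - t₀)) := by
    apply nich_cross_s4 y (fun t => S * Real.exp (L * (t - t₀))) t₀ T1
      (hyc.mono fun s hs => by have := hs.1; simp; linarith) (by fun_prop) (by simpa using hyt0)
    intro t ht hbd heq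
    set W := S * Real.exp (L * (t - t₀)) with hW
    have hW0 : 0 < W := by positivity
    have hWS : S ≤ W := by
      have : 1 ≤ Real.exp (L * (t - t₀)) := Real.one_le_exp (by
        have := ht.1
        have : 0 ≤ t - t₀ := by linarith
        positivity)
      nlinarith
    have hWQ : W ≤ S * Q := by
      refine mul_le_mul_of_nonneg_left (Real.exp_le_exp.mpr ?_) hS.le
      have := ht.2
      gcongr
    have hyW : ∀ s ∈ Icc (t - T) t, |y s| ≤ W := by
      intro s hs
      rcases le_total t₀ s with h1 | h1
      · refine (hbd s ⟨h1, hs.2⟩).trans ?_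
        refine mul_le_mul_of_nonneg_left (Real.exp_le_exp.mpr ?_) hS.le
        have := hs.2
        gcongr
      · exact (hS0 s ⟨by linarith [hs.1, ht.1], h1⟩).le.trans hWS
    have hrt := hr t ht.1.le W (hWQ.trans hSQ) hyW
    have htt := ht.1.le
    have hlin := nich_lin_bound c d (fun j => y (t - τ j t)) (fun j => y (t - σ j t)) hc hd (y t)
      (r t) η W
      (fun j => hyW _ ⟨by linarith [hτT j t htt], by linarith [hτ0 j t htt]⟩)
      (fun j => hyW _ ⟨by linarith [hσT j t htt], by linarith [hσ0 j t htt]⟩)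
      (hyW t ⟨by linarith, le_rfl⟩) hrt
    have hyd := hy t htt
    rw [← hC, ← hD] at hlin
    set lin := ∑ j, c j * y (t - τ j t) - ∑ j, d j * y (t - σ j t) - C * y t + r t with hlindef
    have hbound : |β t * lin| < L * W := by
      rw [abs_mul, abs_of_nonneg (hb.le.trans (hβb t htt))]
      calc β t * |lin| ≤ B * ((2 * C + D + η) * W) :=
            mul_le_mul (hβB t htt) hlin (abs_nonneg _) hB.le
        _ < L * W := by rw [hL]; nlinarith
    rw [abs_lt] at hbound
    rcases le_total 0 (y t) with h0 | h0
    · rw [abs_of_nonneg h0] at heq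
      have := nich_touch y _ _ _ t₀ t₀ t ht.1 le_rfl hyd (hg t)
        (fun s hs => (le_abs_self _).trans (hbd s hs)) heq
      linarith
    · rw [abs_of_nonpos h0] at heq
      have := nich_touch (fun s => - y s) _ _ _ t₀ t₀ t ht.1 le_rfl hyd.fun_neg (hg t)
        (fun s hs => (neg_le_abs _).trans (hbd s hs)) heq
      linarith
  -- phase 2
  set h : ℝ → ℝ := fun t => S * Q * Real.exp (-lam * (t - T1)) with hh
  have hhd : ∀ t, HasDerivAt h (-lam * h t) t := by
    intro t
    have := ((((hasDerivAt_id t).sub_const T1).const_mul (-lam)).exp).const_mul (S * Q)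
    refine this.congr_deriv ?_
    simp only [hh, id]; ring
  have hhpos : ∀ t, 0 < h t := fun t => by positivity
  have hpre : ∀ s ∈ Icc (t₀ - T) T1, |y s| ≤ h s := by
    intro s hs
    have h1 : S * Q ≤ h s := by
      have : 1 ≤ Real.exp (-lam * (s - T1)) := Real.one_le_exp (by nlinarith [hs.2])
      nlinarith [mul_pos hS (by linarith : 0 < Q)]
    refine le_trans ?_ h1
    rcases le_total t₀ s with h2 | h2
    · refine (ph1 s ⟨h2, hs.2⟩).le.trans ?_
      refine mul_le_mul_of_nonneg_left (Real.exp_le_exp.mpr ?_) hS.le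
      have := hs.2
      gcongr
    · have := hS0 s ⟨hs.1, h2⟩
      nlinarith
  have ph2 : ∀ b' ≥ T1, ∀ t ∈ Icc T1 b', |y t| < h t := by
    intro b' hb'
    apply nich_cross_s4 y h T1 b'
      (hyc.mono fun s hs => by have := hs.1; simp; linarith) (by fun_prop)
      (by simpa [hh] using ph1 T1 ⟨by linarith, le_rfl⟩)
    intro t ht hbd heq
    have hall : ∀ s ∈ Icc (t₀ - T) t, |y s| ≤ h s := by
      intro s hs
      rcases le_total s T1 with h1 | h1
      · exact hpre s ⟨hs.1, h1⟩
      · exact hbd s ⟨h1, hs.2⟩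
    have htT := ht.1.le
    have htt : t₀ ≤ t := by linarith
    have hH := hhpos t
    have hyH : ∀ s ∈ Icc (t - 2 * T) t, |y s| ≤ q * h t := by
      intro s hs
      refine (hall s ⟨by linarith [hs.1], hs.2⟩).trans ?_
      have : q * h t = S * Q * (Real.exp (2 * lam * T) * Real.exp (-lam * (t - T1))) := by
        simp only [hh, hq]; ring
      rw [this, ← Real.exp_add]
      refine mul_le_mul_of_nonneg_left (Real.exp_le_exp.mpr ?_) (by positivity)
      nlinarith [hs.1]
    have hqε : q * h t ≤ ε₀ := by
      refine le_trans ?_ hSQq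
      have : Real.exp (-lam * (t - T1)) ≤ 1 := Real.exp_le_one_iff.mpr (by nlinarith)
      have h2 : h t ≤ S * Q := mul_le_of_le_one_right (by positivity) this
      nlinarith
    have hrt : ∀ s ∈ Icc (t - T) t, |r s| ≤ η * (q * h t) := by
      intro s hs
      exact hr s (by linarith [hs.1]) _ hqε
        (fun v hv => hyH v ⟨by linarith [hv.1, hs.1], hv.2.trans hs.2⟩)
    have hfin : ∀ lin, lin ≤ (C * (q - 1) + η * q - D * (1 - ζ * (2 * C + D + η) * q)) * h t →
        -lam * h t ≤ β t * lin → False := by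
      intro lin h1 h2
      have h3 : lin < -(lam / b) * h t := lt_of_le_of_lt h1 (by
        apply mul_lt_mul_of_pos_right _ hH
        linarith)
      have h4 : 0 < lam / b * h t := by positivity
      have h5 : β t * lin ≤ b * lin := mul_le_mul_of_nonpos_right (hβb t htt) (by linarith)
      have h6 : b * lin < b * (-(lam / b) * h t) := mul_lt_mul_of_pos_left h3 hb
      have h7 : b * (-(lam / b) * h t) = -lam * h t := by field_simp
      linarith
    have hyd := hy t htt
    rcases le_total 0 (y t) with h0 | h0
    · rw [abs_of_nonneg h0] at heq
      have h1 := nich_touch y _ _ _ t₀ T1 t ht.1 (by linarith) hyd (hhd t)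
        (fun s hs => (le_abs_self _).trans (hbd s hs)) heq
      have h2 := nich_step c d hc hd β hβ τ σ t₀ T T1 ζ η q (fun s hs => hb.le.trans (hβb s hs))
        hη.le (by linarith) hτ0 hσ0 hτT hσT hT hT1 hζ y r hy t (h t) htT hH heq hyH hrt
      exact hfin _ h2 h1
    · rw [abs_of_nonpos h0] at heq
      have hneg : ∀ t, -(β t * (∑ j, c j * y (t - τ j t)
          - ∑ j, d j * y (t - σ j t) - C * y t + r t)) =
          β t * (∑ j, c j * (-y (t - τ j t))
          - ∑ j, d j * (-y (t - σ j t)) - C * (-y t) + (-r t)) := by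
        intro t
        simp only [mul_neg, Finset.sum_neg_distrib]
        ring
      have hy2 : ∀ t ≥ t₀, HasDerivWithinAt (fun s => - y s) (β t * (∑ j, c j * (-y (t - τ j t))
          - ∑ j, d j * (-y (t - σ j t)) - C * (-y t) + (-r t))) (Ici t₀) t := by
        intro s hs
        rw [← hneg]
        exact (hy s hs).fun_neg
      have h1 := nich_touch (fun s => - y s) _ _ _ t₀ T1 t ht.1 (by linarith) (hy2 t htt) (hhd t)
        (fun s hs => (neg_le_abs _).trans (hbd s hs)) heq
      have h2 := nich_step c d hc hd β hβ τ σ t₀ T T1 ζ η q (fun s hs => hb.le.trans (hβb s hs))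
        hη.le (by linarith) hτ0 hσ0 hτT hσT hT hT1 hζ (fun s => - y s) (fun s => - r s) hy2
        t (h t) htT hH heq (by simpa using hyH) (by simpa using hrt)
      exact hfin _ h2 h1
  intro t ht
  have hfinal : h t = Q * Real.exp (lam * (T1 - t₀)) * Real.exp (-lam * (t - t₀)) * S := by
    have : Real.exp (-lam * (t - T1)) = Real.exp (lam * (T1 - t₀)) * Real.exp (-lam * (t - t₀)) := by
      rw [← Real.exp_add]; congr 1; ring
    simp only [hh, this]; ring
  rw [← hfinal]
  rcases le_total t T1 with h1 | h1
  · exact hpre t ⟨by linarith, h1⟩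
  · exact (ph2 t h1 t ⟨h1, le_rfl⟩).le

lemma nich_rem_s4 {m : ℕ} (p a : Fin m → ℝ) (K η : ℝ) (hη : 0 < η) :
    ∃ ε₀ > 0, ∀ j, ∀ u v W : ℝ, W ≤ ε₀ → |u - K| ≤ W → |v - K| ≤ W →
      |p j * u * Real.exp (-(a j) * v) - p j * K * Real.exp (-(a j) * K)
        - p j * Real.exp (-(a j) * K) * (u - K)
        + K * a j * (p j * Real.exp (-(a j) * K)) * (v - K)| ≤ η * W := by
  have key : ∀ j, ∀ᶠ z : ℝ × ℝ in 𝓝 (K, K),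
      |p j * z.1 * Real.exp (-(a j) * z.2) - p j * K * Real.exp (-(a j) * K)
        - p j * Real.exp (-(a j) * K) * (z.1 - K)
        + K * a j * (p j * Real.exp (-(a j) * K)) * (z.2 - K)| ≤ η * ‖z - (K, K)‖ := by
    intro j
    have h1 : HasFDerivAt (fun z : ℝ × ℝ => z.1) (ContinuousLinearMap.fst ℝ ℝ ℝ) (K, K) :=
      hasFDerivAt_fst
    have h2 : HasFDerivAt (fun z : ℝ × ℝ => z.2) (ContinuousLinearMap.snd ℝ ℝ ℝ) (K, K) :=
      hasFDerivAt_snd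
    have h3 := (h1.const_mul (p j)).mul (h2.const_mul (-(a j))).exp
    have h4 := h3.isLittleO.def hη
    filter_upwards [h4] with z hz
    rw [Real.norm_eq_abs] at hz
    refine le_trans (le_of_eq ?_) hz
    congr 1
    simp
    ring
  have := Filter.eventually_all.mpr key
  rw [Metric.eventually_nhds_iff] at this
  obtain ⟨e, he, hall⟩ := this
  refine ⟨e / 2, by positivity, fun j u v W hW hu hv => ?_⟩
  have hn : ‖((u, v) : ℝ × ℝ) - (K, K)‖ ≤ W := by
    simp [Prod.norm_def, hu, hv]
  have := hall (y := (u, v)) (by rw [dist_eq_norm]; linarith) j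
  exact this.trans (mul_le_mul_of_nonneg_left hn hη.le)

lemma nich_main
    (m : ℕ) (hm : 1 ≤ m) (p a : Fin m → ℝ)
    (hp : ∀ j, 0 < p j) (ha : ∀ j, 0 < a j) (δ : ℝ) (hδ : 0 < δ)
    (t₀ : ℝ) (β : ℝ → ℝ) (τ σ : Fin m → ℝ → ℝ)
    (hβc : ContinuousOn β (Set.Ici t₀))
    (hτ0 : ∀ j, ∀ t ∈ Set.Ici t₀, 0 ≤ τ j t)
    (hσ0 : ∀ j, ∀ t ∈ Set.Ici t₀, 0 ≤ σ j t)
    (βminus : ℝ) (hβminus : IsGLB (β '' Set.Ici t₀) βminus) (hβmpos : 0 < βminus)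
    (hβub : ∃ B, ∀ t ∈ Set.Ici t₀, β t ≤ B)
    (T : ℝ)
    (hτbar : IsLUB ((⋃ j, τ j '' Set.Ici t₀) ∪ ⋃ j, σ j '' Set.Ici t₀) T)
    (K : ℝ) (hK0 : 0 < K) (hK : ∑ j, p j * Real.exp (-(a j) * K) = δ)
    (ζM : ℝ)
    (hζM : IsGreatest (Set.range fun j =>
      Filter.limsup (fun t => ∫ s in (t - σ j t)..t, β s) Filter.atTop) ζM)
    (hζ : ζM < 1 / (2 * δ + K * ∑ j, p j * a j * Real.exp (-(a j) * K))) :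
      LocallyExpStable m p a δ t₀ T β τ σ K := by
  obtain ⟨B, hB⟩ := hβub
  have hτT : ∀ j, ∀ t ≥ t₀, τ j t ≤ T := fun j t ht =>
    hτbar.1 (Or.inl (mem_iUnion.mpr ⟨j, t, ht, rfl⟩))
  have hσT : ∀ j, ∀ t ≥ t₀, σ j t ≤ T := fun j t ht =>
    hτbar.1 (Or.inr (mem_iUnion.mpr ⟨j, t, ht, rfl⟩))
  let j0 : Fin m := ⟨0, hm⟩
  have hT : 0 ≤ T := (hσ0 j0 t₀ self_mem_Ici).trans (hσT j0 t₀ le_rfl)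
  have hβb : ∀ t ≥ t₀, βminus ≤ β t := fun t ht => hβminus.1 ⟨t, ht, rfl⟩
  set β' : ℝ → ℝ := fun t => β (max t₀ t) with hβ'
  have hβ'c : Continuous β' :=
    hβc.comp_continuous (by fun_prop) (fun t => mem_Ici.mpr (le_max_left _ _))
  have hβe : ∀ t ≥ t₀, β' t = β t := fun t ht => by simp [hβ', max_eq_right ht]
  set c : Fin m → ℝ := fun j => p j * Real.exp (-(a j) * K) with hc
  set d : Fin m → ℝ := fun j => K * a j * (p j * Real.exp (-(a j) * K)) with hd
  have hc0 : ∀ j, 0 ≤ c j := fun j => by have := hp j; positivity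
  have hd0 : ∀ j, 0 < d j := fun j => by have := hp j; have := ha j; positivity
  have hCs : ∑ j, c j = δ := hK
  have hDs : K * ∑ j, p j * a j * Real.exp (-(a j) * K) = ∑ j, d j := by
    rw [Finset.mul_sum]; exact Finset.sum_congr rfl fun j _ => by simp only [hd]; ring
  have hD0 : 0 < ∑ j, d j := Finset.sum_pos (fun j _ => hd0 j) ⟨j0, Finset.mem_univ _⟩
  rw [hDs, lt_div_iff₀ (by positivity)] at hζ
  obtain ⟨ζ, hζ1, hζ2⟩ : ∃ ζ, ζM < ζ ∧ ζ * (2 * δ + ∑ j, d j) < 1 := by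
    obtain ⟨ζ, h1, h2⟩ := exists_between ((lt_div_iff₀ (by positivity)).mpr hζ)
    exact ⟨ζ, h1, (lt_div_iff₀ (by positivity)).mp h2⟩
  have hbd : ∀ j, ∀ t ≥ t₀ + T, ∫ s in (t - σ j t)..t, β s ≤ B * T := by
    intro j t ht
    have htt : t₀ ≤ t := by linarith
    have h0 := hσ0 j t htt
    have h1 := hσT j t htt
    have hB0 : 0 ≤ B := hβmpos.le.trans ((hβb t₀ le_rfl).trans (hB t₀ self_mem_Ici))
    have := intervalIntegral.norm_integral_le_of_norm_le_const (a := t - σ j t) (b := t) (f := β)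
      (C := B) (by
        intro s hs
        rw [uIoc_of_le (by linarith)] at hs
        have hs1 : t₀ ≤ s := by linarith [hs.1]
        rw [Real.norm_eq_abs, abs_of_nonneg (hβmpos.le.trans (hβb s hs1))]
        exact hB s hs1)
    refine (le_abs_self _).trans (this.trans ?_)
    rw [abs_of_nonneg (by linarith)]
    exact mul_le_mul_of_nonneg_left (by linarith) hB0
  have hev : ∀ᶠ t in atTop, ∀ j, ∫ s in (t - σ j t)..t, β s < ζ := by
    rw [Filter.eventually_all]
    intro j
    refine Filter.eventually_lt_of_limsup_lt (lt_of_le_of_lt (hζM.2 ⟨j, rfl⟩) hζ1) ?_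
    refine Filter.isBoundedUnder_of_eventually_le (a := B * T) ?_
    filter_upwards [eventually_ge_atTop (t₀ + T)] with t ht using hbd j t ht
  obtain ⟨T2, hT2⟩ := Filter.eventually_atTop.mp hev
  obtain ⟨η, hη, habs⟩ := nich_abstract c d hc0 (fun j => (hd0 j).le) hD0 β' hβ'c τ σ t₀ T
    (max (t₀ + T) T2) ζ βminus B hβmpos (fun t ht => by rw [hβe t ht]; exact hβb t ht)
    (fun t ht => by rw [hβe t ht]; exact hB t ht) hτ0 hσ0 hτT hσT hT (le_max_left _ _)
    (by
      intro t ht j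
      have ht1 : t₀ + T ≤ t := (le_max_left _ _).trans ht
      have htt : t₀ ≤ t := by linarith
      refine le_trans (le_of_eq ?_) (hT2 t ((le_max_right _ _).trans ht) j).le
      apply intervalIntegral.integral_congr
      intro s hs
      rw [uIcc_of_le (by linarith [hσ0 j t htt])] at hs
      exact hβe s (by linarith [hs.1, hσT j t htt]))
    (by rw [hCs]; exact hζ2)
  have hm0 : (0:ℝ) < m := by exact_mod_cast hm
  obtain ⟨ε₀, hε₀, hrem⟩ := nich_rem_s4 p a K (η / m) (by positivity)
  obtain ⟨ε, hε, M, hM, lam, hlam, hstab⟩ := habs ε₀ hε₀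
  refine ⟨ε, hε, M, hM, lam, hlam, ?_⟩
  rintro x ⟨hxc, hxd, -, -⟩ hS t ht
  set S := sSup ((fun s => |x s - K|) '' Set.Icc (t₀ - T) t₀) with hSdef
  have hSb : ∀ s ∈ Icc (t₀ - T) t₀, |x s - K| ≤ S := by
    intro s hs
    refine le_csSup ?_ ⟨s, hs, rfl⟩
    exact (isCompact_Icc.image_of_continuousOn
      (((hxc.mono Icc_subset_Ici_self).sub continuousOn_const).abs)).bddAbove
  have hS0 : 0 ≤ S := (abs_nonneg _).trans (hSb t₀ ⟨by linarith, le_rfl⟩)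
  have main : ∀ S' ∈ Ioo S (2 * ε), |x t - K| ≤ M * Real.exp (-lam * (t - t₀)) * S' := by
    intro S' hS'
    refine hstab (fun s => x s - K)
      (fun t => ∑ j, (p j * x (t - τ j t) * Real.exp (-(a j) * x (t - σ j t))
        - p j * K * Real.exp (-(a j) * K)
        - p j * Real.exp (-(a j) * K) * (x (t - τ j t) - K)
        + K * a j * (p j * Real.exp (-(a j) * K)) * (x (t - σ j t) - K))) S'
      (hxc.sub continuousOn_const) ?_ ?_ (hS0.trans_lt hS'.1) hS'.2
      (fun s hs => (hSb s hs).trans_lt hS'.1) t ht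
    · intro t ht
      refine ((hxd t ht).sub_const K).congr_deriv ?_
      rw [hβe t ht]
      congr 1
      have h1 : ∑ j, p j * K * Real.exp (-(a j) * K) = δ * K := by
        rw [← hK, Finset.sum_mul]; exact Finset.sum_congr rfl fun j _ => by ring
      rw [Finset.sum_add_distrib, Finset.sum_sub_distrib, Finset.sum_sub_distrib, h1, hCs]
      simp only [hc, hd]
      ring
    · intro t ht W hW hyW
      refine (Finset.abs_sum_le_sum_abs _ _).trans ?_
      have : ∑ _j : Fin m, η / m * W = η * W := by
        simp; field_simp
      rw [← this]
      refine Finset.sum_le_sum fun j _ => hrem j _ _ W hW ?_ ?_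
      · exact hyW _ ⟨by linarith [hτT j t ht], by linarith [hτ0 j t ht]⟩
      · exact hyW _ ⟨by linarith [hσT j t ht], by linarith [hσ0 j t ht]⟩
  have hlim : Tendsto (fun S' => M * Real.exp (-lam * (t - t₀)) * S') (𝓝[>] S)
      (𝓝 (M * Real.exp (-lam * (t - t₀)) * S)) :=
    ((by fun_prop : Continuous fun S' => M * Real.exp (-lam * (t - t₀)) * S').tendsto S).mono_left
      nhdsWithin_le_nhds
  refine ge_of_tendsto hlim ?_
  filter_upwards [Ioo_mem_nhdsGT (by linarith : S < 2 * ε)] with S' hS' using main S' hS'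

end

/- STATEMENT 4 (Corollary 2.1): with ζ_M := max_j limsup_{t→∞} ∫_{t−σ_j(t)}^t β(s) ds
   and a⁺ := max_j a_j, if ζ_M < 1/(2δ + K Σ_j p_j a_j e^{−a_j K}) then K is
   locally exponentially stable; in particular this holds if ζ_M < 1/(δ(2 + a⁺K)). -/
theorem nicholson_local_exponential_stability_cor
    (m : ℕ) (hm : 1 ≤ m) (p a : Fin m → ℝ)
    (hp : ∀ j, 0 < p j) (ha : ∀ j, 0 < a j) (δ : ℝ) (hδ : 0 < δ)
    (t₀ : ℝ) (β : ℝ → ℝ) (τ σ : Fin m → ℝ → ℝ)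
    (hβc : ContinuousOn β (Set.Ici t₀))
    (hτc : ∀ j, ContinuousOn (τ j) (Set.Ici t₀))
    (hσc : ∀ j, ContinuousOn (σ j) (Set.Ici t₀))
    (hτ0 : ∀ j, ∀ t ∈ Set.Ici t₀, 0 ≤ τ j t)
    (hσ0 : ∀ j, ∀ t ∈ Set.Ici t₀, 0 ≤ σ j t)
    (βminus : ℝ) (hβminus : IsGLB (β '' Set.Ici t₀) βminus) (hβmpos : 0 < βminus)
    (hβub : ∃ B, ∀ t ∈ Set.Ici t₀, β t ≤ B)
    (τbar : ℝ)
    (hτbar : IsLUB ((⋃ j, τ j '' Set.Ici t₀) ∪ ⋃ j, σ j '' Set.Ici t₀) τbar)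
    -- p > δ and K is the positive equilibrium
    (hpδ : δ < ∑ j, p j)
    (K : ℝ) (hK0 : 0 < K) (hK : ∑ j, p j * Real.exp (-(a j) * K) = δ)
    -- ζ_M := max_j limsup_{t→∞} ∫_{t−σ_j(t)}^t β(s) ds,  a⁺ := max_j a_j
    (ζM : ℝ)
    (hζM : IsGreatest (Set.range fun j =>
      Filter.limsup (fun t => ∫ s in (t - σ j t)..t, β s) Filter.atTop) ζM)
    (aplus : ℝ) (haplus : IsGreatest (Set.range a) aplus) :
    (ζM < 1 / (2 * δ + K * ∑ j, p j * a j * Real.exp (-(a j) * K)) →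
      LocallyExpStable m p a δ t₀ τbar β τ σ K) ∧
    (ζM < 1 / (δ * (2 + aplus * K)) →
      LocallyExpStable m p a δ t₀ τbar β τ σ K) := by
  have hfirst := nich_main m hm p a hp ha δ hδ t₀ β τ σ hβc hτ0 hσ0 βminus hβminus hβmpos hβub
    τbar hτbar K hK0 hK ζM hζM
  refine ⟨hfirst, fun h => hfirst (h.trans_le ?_)⟩
  have hs : 0 < ∑ j, p j * a j * Real.exp (-(a j) * K) :=
    Finset.sum_pos (fun j _ => by have := hp j; have := ha j; positivity)
      ⟨⟨0, hm⟩, Finset.mem_univ _⟩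
  apply one_div_le_one_div_of_le (by positivity)
  have : ∑ j, p j * a j * Real.exp (-(a j) * K) ≤ aplus * δ := by
    rw [← hK, Finset.mul_sum]
    refine Finset.sum_le_sum fun j _ => ?_
    have h1 : a j ≤ aplus := haplus.2 ⟨j, rfl⟩
    have h2 : 0 < p j * Real.exp (-(a j) * K) := by have := hp j; positivity
    nlinarith
  nlinarith
end

section
/- (Corollary 2.2.) Consider the one-pair Nicholson equation x'(t) = β(t)(p x(t−τ(t)) e^{−a x(t−σ(t))} − δ x(t)) with p > δ > 0, a > 0. If ζ_M := limsup_{t→∞} ∫_{t−σ(t)}^{t} β(s) ds < 1/(δ(2 + log(p/δ))), then the positive equilibrium K = (1/a) log(p/δ) is locally exponentially stable. -/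
/-- A solution of the one-pair Nicholson equation
`x'(t) = β(t)(p x(t−τ(t)) e^{−a x(t−σ(t))} − δ x(t))`, `t ≥ t₀`,
defined on `[t₀ − τbar, ∞)`, with admissible initial data. -/
def NicholsonSolution1 (p a δ t₀ τbar : ℝ) (β τ σ : ℝ → ℝ) (x : ℝ → ℝ) : Prop :=
  ContinuousOn x (Set.Ici (t₀ - τbar)) ∧
  (∀ t ∈ Set.Ici t₀, HasDerivWithinAt x
      (β t * (p * x (t - τ t) * Real.exp (-a * x (t - σ t)) - δ * x t))
      (Set.Ici t₀) t) ∧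
  (∀ s, t₀ - τbar ≤ s → s < t₀ → 0 ≤ x s) ∧
  0 < x t₀

/- STATEMENT 5 (Corollary 2.2): for the one-pair Nicholson equation with p > δ > 0,
   if ζ_M := limsup_{t→∞} ∫_{t−σ(t)}^t β(s) ds < 1/(δ(2 + log(p/δ))), then the
   positive equilibrium K = (1/a) log(p/δ) is locally exponentially stable. -/
open Set Filter Topology in
lemma nich_fence (u g : ℝ → ℝ) (b t1 t2 : ℝ) (h1 : b ≤ t1) (hu : ContinuousOn u (Ici b))
    (hg : Continuous g) (h0 : ∀ s ∈ Icc b t1, |u s| < g s)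
    (hc : ∀ t, t1 < t → t ≤ t2 → (∀ s ∈ Ico b t, |u s| < g s) → |u t| = g t → False) :
    ∀ s ∈ Icc b t2, |u s| < g s := by
  by_contra hcon
  push Not at hcon
  obtain ⟨s0, hs0, hs0'⟩ := hcon
  have hu2 : ContinuousOn (fun t => |u t|) (Icc b t2) :=
    (hu.mono Icc_subset_Ici_self).abs
  have hcl : IsClosed {t ∈ Icc b t2 | g t ≤ |u t|} :=
    isClosed_Icc.isClosed_le hg.continuousOn hu2
  have hcomp : IsCompact {t ∈ Icc b t2 | g t ≤ |u t|} :=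
    isCompact_Icc.of_isClosed_subset hcl (fun t ht => ht.1)
  obtain ⟨t, ht, htl⟩ := hcomp.exists_isLeast ⟨s0, hs0, hs0'⟩
  have htt : t1 < t := by
    by_contra hle
    push Not at hle
    exact absurd (h0 t ⟨ht.1.1, hle⟩) (not_lt.2 ht.2)
  have hprev : ∀ s ∈ Ico b t, |u s| < g s := by
    intro s hs
    by_contra hle
    push Not at hle
    exact absurd (htl ⟨⟨hs.1, hs.2.le.trans ht.1.2⟩, hle⟩) (not_le.2 hs.2)
  have hbt : b < t := h1.trans_lt htt
  refine hc t htt ht.1.2 hprev (le_antisymm ?_ ht.2)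
  have hmem : t ∈ closure (Ico b t) := by
    rw [closure_Ico hbt.ne]; exact ⟨hbt.le, le_rfl⟩
  refine ContinuousWithinAt.closure_le hmem ?_ hg.continuousWithinAt (fun y hy => (hprev y hy).le)
  exact ((hu t hbt.le).abs).mono (fun y hy => hy.1)

open Set Filter Topology in
lemma nich_cross_s5 (u g : ℝ → ℝ) (u' g' b t : ℝ) (hbt : b < t) (hu : HasDerivAt u u' t)
    (hg : HasDerivAt g g' t) (hle : ∀ s ∈ Ico b t, u s ≤ g s) (he : u t = g t) : g' ≤ u' := by
  have hw := (hu.sub hg)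
  have h2 := (hasDerivAt_iff_tendsto_slope_left_right.1 hw).1
  have : 0 ≤ u' - g' := by
    refine ge_of_tendsto h2 ?_
    have : Ioo b t ∈ 𝓝[<] t := Ioo_mem_nhdsLT hbt
    filter_upwards [this] with s hs
    rw [slope_def_field]
    have := hle s ⟨hs.1.le, hs.2⟩
    apply div_nonneg_of_nonpos
    · simp only [Pi.sub_apply]; linarith
    · linarith [hs.2]
  linarith

lemma nich_Gbound (δ L η m u1 u2 u3 G : ℝ) (hδ : 0 < δ) (hL : 0 < L)
    (h1 : |u1| ≤ m) (h2 : |u2| ≤ m) (h3 : |u3| ≤ m)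
    (hG : |G - δ * (u1 - L * u2 - u3)| ≤ η * m) : |G| ≤ (δ * (2 + L) + η) * m := by
  rw [abs_le] at *
  have e1 : L * u2 ≤ L * m := by nlinarith
  have e2 : -(L * m) ≤ L * u2 := by nlinarith
  have e3 : δ * (u1 - L * u2 - u3) ≤ δ * ((2 + L) * m) := by
    apply mul_le_mul_of_nonneg_left _ hδ.le; nlinarith
  have e4 : δ * (-((2 + L) * m)) ≤ δ * (u1 - L * u2 - u3) := by
    apply mul_le_mul_of_nonneg_left _ hδ.le; nlinarith
  constructor <;> nlinarith

lemma nich_lin (p a δ K L m u1 u2 : ℝ) (hδ : 0 < δ) (ha : 0 < a) (hK : 0 < K)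
    (hL : L = a * K) (hp : p * Real.exp (-a * K) = δ) (h1 : |u1| ≤ m) (h2 : |u2| ≤ m)
    (hm : a * m ≤ 1) :
    |p * (K + u1) * Real.exp (-a * (K + u2)) - δ * K - δ * u1 + δ * L * u2|
      ≤ (δ * (K * a ^ 2 + 2 * a)) * m ^ 2 := by
  have hm0 : 0 ≤ m := (abs_nonneg _).trans h1
  have hab : |-a * u2| ≤ a * m := by
    rw [abs_mul, abs_neg, abs_of_pos ha]; gcongr
  have k1 := Real.abs_exp_sub_one_sub_id_le (hab.trans hm)
  have k2 := Real.abs_exp_sub_one_le (hab.trans hm)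
  have e : p * (K + u1) * Real.exp (-a * (K + u2)) - δ * K - δ * u1 + δ * L * u2
      = δ * (K * (Real.exp (-a * u2) - 1 - (-a * u2)) + u1 * (Real.exp (-a * u2) - 1)) := by
    rw [show -a * (K + u2) = -a * K + -a * u2 by ring, Real.exp_add, hL, ← hp]; ring
  rw [e, abs_mul, abs_of_pos hδ, mul_assoc]
  refine mul_le_mul_of_nonneg_left ?_ hδ.le
  refine (abs_add_le _ _).trans ?_
  rw [abs_mul, abs_mul, abs_of_pos hK]
  have s1 : (-a * u2) ^ 2 ≤ (a * m) ^ 2 := by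
    rw [← sq_abs]; gcongr
  have s2 : K * |Real.exp (-a * u2) - 1 - (-a * u2)| ≤ K * (a * m) ^ 2 :=
    mul_le_mul_of_nonneg_left (k1.trans s1) hK.le
  have s3 : |u1| * |Real.exp (-a * u2) - 1| ≤ m * (2 * (a * m)) := by
    gcongr; linarith
  nlinarith

open Set in
lemma nich_int (u G β : ℝ → ℝ) (t₀ t1 t2 C : ℝ) (h1 : t₀ < t1) (h12 : t1 ≤ t2)
    (hβc : ContinuousOn β (Ici t₀)) (hβ0 : ∀ t ≥ t₀, 0 ≤ β t)
    (hder : ∀ t > t₀, HasDerivAt u (β t * G t) t)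
    (hG : ∀ t ∈ Icc t1 t2, |G t| ≤ C) : |u t2 - u t1| ≤ C * ∫ s in t1..t2, β s := by
  have hca : ∀ s, t₀ < s → ContinuousAt β s := fun s hs => hβc.continuousAt (Ici_mem_nhds hs)
  have hd : ∀ s ∈ Icc t1 t2, HasDerivAt (fun r => ∫ y in t1..r, β y) (β s) s := by
    intro s hs
    have hs0 : t₀ < s := h1.trans_le hs.1
    refine intervalIntegral.integral_hasDerivAt_right ?_ ?_ (hca s hs0)
    · apply ContinuousOn.intervalIntegrable
      apply hβc.mono
      rw [uIcc_of_le hs.1]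
      exact fun y hy => h1.le.trans hy.1
    · exact (hβc.mono Ioi_subset_Ici_self).stronglyMeasurableAtFilter isOpen_Ioi s hs0
  have key := image_norm_le_of_norm_deriv_right_le_deriv_boundary' (f := fun s => u s - u t1)
    (f' := fun s => β s * G s) (a := t1) (b := t2)
    (B := fun s => C * ∫ y in t1..s, β y) (B' := fun s => C * β s) ?_ ?_ ?_ ?_ ?_ ?_
  · simpa using key (right_mem_Icc.2 h12)
  · intro s hs
    exact ((hder s (h1.trans_le hs.1)).sub_const _).continuousAt.continuousWithinAt
  · intro s hs
    exact ((hder s (h1.trans_le hs.1)).sub_const _).hasDerivWithinAt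
  · simp
  · intro s hs
    exact ((hd s hs).const_mul C).continuousAt.continuousWithinAt
  · intro s hs
    exact ((hd s (Ico_subset_Icc_self hs)).const_mul C).hasDerivWithinAt
  · intro s hs
    have b0 := hβ0 s (h1.le.trans hs.1)
    rw [Real.norm_eq_abs, abs_mul, abs_of_nonneg b0, mul_comm]
    exact mul_le_mul_of_nonneg_right (hG s (Ico_subset_Icc_self hs)) b0

open Set in
/-- no upward crossing in phase one -/
lemma nich_step1 (u G β τ σ g : ℝ → ℝ) (δ L η ρ t₀ τbar B t : ℝ) (hδ : 0 < δ) (hL : 0 < L)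
    (hη : 0 < η) (hβ0 : ∀ t ≥ t₀, 0 ≤ β t) (hβB : ∀ t ≥ t₀, β t ≤ B)
    (hτ0 : ∀ t ≥ t₀, 0 ≤ τ t ∧ τ t ≤ τbar) (hσ0 : ∀ t ≥ t₀, 0 ≤ σ t ∧ σ t ≤ τbar)
    (hder : ∀ t > t₀, HasDerivAt u (β t * G t) t)
    (hG : ∀ t ≥ t₀, ∀ m ≤ ρ, |u (t - τ t)| ≤ m → |u (t - σ t)| ≤ m →
      |G t - δ * (u (t - τ t) - L * u (t - σ t) - u t)| ≤ η * m)
    (ht : t₀ < t) (hg : HasDerivAt g ((B * (δ * (2 + L) + η) + 1) * g t) t)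
    (hgmono : Monotone g) (hgp : 0 < g t) (hgρ : g t ≤ ρ)
    (hprev : ∀ s ∈ Ico (t₀ - τbar) t, |u s| < g s) (he : u t = g t) : False := by
  have hb : t₀ - τbar < t := by linarith [hτ0 t ht.le]
  have hall : ∀ s, t₀ - τbar ≤ s → s ≤ t → |u s| ≤ g t := by
    intro s h1 h2
    rcases h2.lt_or_eq with h | h
    · exact (hprev s ⟨h1, h⟩).le.trans (hgmono h2)
    · rw [h, he, abs_of_pos hgp]
  obtain ⟨a1, a2⟩ := hτ0 t ht.le
  obtain ⟨a3, a4⟩ := hσ0 t ht.le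
  have b1 := hall (t - τ t) (by linarith) (by linarith)
  have b2 := hall (t - σ t) (by linarith) (by linarith)
  have b3 := hall t hb.le le_rfl
  have hGb := nich_Gbound δ L η (g t) _ _ _ (G t) hδ hL b1 b2 b3 (hG t ht.le _ hgρ b1 b2)
  have hc := nich_cross_s5 u g _ _ _ t hb (hder t ht) hg
    (fun s hs => (le_abs_self _).trans (hprev s hs).le) he
  have h5 : β t * G t ≤ B * ((δ * (2 + L) + η) * g t) := by
    have hC : 0 ≤ (δ * (2 + L) + η) * g t := by positivity
    calc β t * G t ≤ β t * ((δ * (2 + L) + η) * g t) :=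
          mul_le_mul_of_nonneg_left ((le_abs_self _).trans hGb) (hβ0 t ht.le)
      _ ≤ _ := mul_le_mul_of_nonneg_right (hβB t ht.le) hC
  nlinarith

open Set in
/-- no upward crossing in phase two -/
lemma nich_step2 (u G β τ σ g : ℝ → ℝ) (δ L η ρ t₀ τbar T c E lam βm t : ℝ) (hδ : 0 < δ)
    (hL : 0 < L) (hη : 0 < η) (hβm : 0 < βm) (hβ0 : ∀ t ≥ t₀, βm ≤ β t)
    (hβc : ContinuousOn β (Ici t₀))
    (hτ0 : ∀ t ≥ t₀, 0 ≤ τ t ∧ τ t ≤ τbar) (hσ0 : ∀ t ≥ t₀, 0 ≤ σ t ∧ σ t ≤ τbar)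
    (hder : ∀ t > t₀, HasDerivAt u (β t * G t) t)
    (hG : ∀ t ≥ t₀, ∀ m ≤ ρ, |u (t - τ t)| ≤ m → |u (t - σ t)| ≤ m →
      |G t - δ * (u (t - τ t) - L * u (t - σ t) - u t)| ≤ η * m)
    (hT : t₀ < T) (ht : T + τbar < t) (hc : ∫ s in (t - σ t)..t, β s ≤ c)
    (hE : 1 ≤ E) (hlam : 0 < lam)
    (hΦ : βm * (δ * (E - 1 - L + L * (δ * (2 + L) + η) * c * E) + η * E) < -lam)
    (hg : HasDerivAt g (-lam * g t) t)
    (hgE : ∀ s, t - 2 * τbar ≤ s → s ≤ t → g s ≤ E * g t) (hgp : 0 < g t) (hgρ : E * g t ≤ ρ)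
    (hprev : ∀ s ∈ Ico (t₀ - τbar) t, |u s| < g s) (he : u t = g t) : False := by
  have hτb : 0 ≤ τbar := (hτ0 t₀ le_rfl).1.trans (hτ0 t₀ le_rfl).2
  have ht0 : t₀ < t := by linarith
  have hb : t₀ - τbar < t := by linarith
  have hall : ∀ s, t - 2 * τbar ≤ s → s ≤ t → |u s| ≤ E * g t := by
    intro s h1 h2
    rcases h2.lt_or_eq with h | h
    · exact (hprev s ⟨by linarith, h⟩).le.trans (hgE s h1 h2)
    · rw [h, he, abs_of_pos hgp]; nlinarith
  obtain ⟨a1, a2⟩ := hτ0 t ht0.le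
  obtain ⟨a3, a4⟩ := hσ0 t ht0.le
  have hGC : ∀ s ∈ Icc (t - σ t) t, |G s| ≤ (δ * (2 + L) + η) * (E * g t) := by
    intro s hs
    have hs0 : t₀ ≤ s := by linarith [hs.1]
    obtain ⟨c1, c2⟩ := hτ0 s hs0
    obtain ⟨c3, c4⟩ := hσ0 s hs0
    have b1 := hall (s - τ s) (by linarith [hs.1]) (by linarith [hs.2])
    have b2 := hall (s - σ s) (by linarith [hs.1]) (by linarith [hs.2])
    have b3 := hall s (by linarith [hs.1]) hs.2
    exact nich_Gbound δ L η _ _ _ _ (G s) hδ hL b1 b2 b3 (hG s hs0 _ hgρ b1 b2)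
  have hint := nich_int u G β t₀ (t - σ t) t _ (by linarith) (by linarith) hβc
    (fun s hs => hβm.le.trans (hβ0 s hs)) hder hGC
  have b1 := hall (t - τ t) (by linarith) (by linarith)
  have b2 := hall (t - σ t) (by linarith) (by linarith)
  have hGt := hG t ht0.le _ hgρ b1 b2
  have hcr := nich_cross_s5 u g _ _ _ t hb (hder t ht0) hg
    (fun s hs => (le_abs_self _).trans (hprev s hs).le) he
  have hC : 0 ≤ (δ * (2 + L) + η) * (E * g t) := by positivity
  have h6 : g t - u (t - σ t) ≤ (δ * (2 + L) + η) * (E * g t) * c := by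
    have h6' := (le_abs_self _).trans (hint.trans (mul_le_mul_of_nonneg_left hc hC))
    linarith
  have h7 : G t ≤ δ * (u (t - τ t) - L * u (t - σ t) - u t) + η * (E * g t) := by
    linarith [(abs_le.1 hGt).2]
  have h8 : u (t - τ t) - L * u (t - σ t) - u t ≤
      E * g t - L * (g t - (δ * (2 + L) + η) * (E * g t) * c) - g t := by
    have := mul_le_mul_of_nonneg_left h6 hL.le
    have := (abs_le.1 b1).2
    rw [he]; linarith
  have h9 := mul_le_mul_of_nonneg_left h8 hδ.le
  set Φ := δ * (E - 1 - L + L * (δ * (2 + L) + η) * c * E) + η * E with hΦd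
  have h10 : G t ≤ Φ * g t := by rw [hΦd]; linarith
  have hΦn : Φ < 0 := by
    by_contra hh
    push Not at hh
    have := mul_nonneg hβm.le hh
    linarith
  have hβt := hβ0 t ht0.le
  have h11 : β t * G t ≤ β t * (Φ * g t) := mul_le_mul_of_nonneg_left h10 (hβm.le.trans hβt)
  have h12 : β t * (Φ * g t) ≤ βm * (Φ * g t) :=
    mul_le_mul_of_nonpos_right hβt (by nlinarith)
  have h13 : βm * Φ * g t < -lam * g t := mul_lt_mul_of_pos_right hΦ hgp
  linarith

open Set in
lemma nich_combine (u G β τ σ : ℝ → ℝ) (δ L η ρ t₀ τbar T c lam βm B N : ℝ) (hδ : 0 < δ)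
    (hL : 0 < L) (hη : 0 < η) (hβm : 0 < βm) (hβ0 : ∀ t ≥ t₀, βm ≤ β t)
    (hβB : ∀ t ≥ t₀, β t ≤ B)
    (hβc : ContinuousOn β (Ici t₀))
    (hτ0 : ∀ t ≥ t₀, 0 ≤ τ t ∧ τ t ≤ τbar) (hσ0 : ∀ t ≥ t₀, 0 ≤ σ t ∧ σ t ≤ τbar)
    (huc : ContinuousOn u (Ici (t₀ - τbar)))
    (hder : ∀ t > t₀, HasDerivAt u (β t * G t) t)
    (hG : ∀ t ≥ t₀, ∀ m ≤ ρ, |u (t - τ t)| ≤ m → |u (t - σ t)| ≤ m →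
      |G t - δ * (u (t - τ t) - L * u (t - σ t) - u t)| ≤ η * m)
    (hT : t₀ < T) (hc : ∀ t ≥ T, ∫ s in (t - σ t)..t, β s ≤ c)
    (hlam : 0 < lam)
    (hΦ : βm * (δ * (Real.exp (2 * lam * τbar) - 1 - L +
      L * (δ * (2 + L) + η) * c * Real.exp (2 * lam * τbar)) + η * Real.exp (2 * lam * τbar)) < -lam)
    (hN : 0 < N) (hN0 : ∀ s ∈ Icc (t₀ - τbar) t₀, |u s| < N)
    (hNρ : Real.exp (2 * lam * τbar) *
      (N * Real.exp ((B * (δ * (2 + L) + η) + 1) * (T + τbar - t₀ + τbar))) ≤ ρ) :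
    ∀ t ≥ t₀, |u t| ≤ N * Real.exp ((B * (δ * (2 + L) + η) + 1) * (T + τbar - t₀ + τbar)) *
      Real.exp (-lam * (t - (T + τbar))) := by
  have hτb : 0 ≤ τbar := (hτ0 t₀ le_rfl).1.trans (hτ0 t₀ le_rfl).2
  have hB : 0 < B := hβm.trans_le ((hβ0 t₀ le_rfl).trans (hβB t₀ le_rfl))
  set R := B * (δ * (2 + L) + η) + 1 with hR
  have hRp : 0 < R := by positivity
  set E := Real.exp (2 * lam * τbar) with hEd
  have hE : 1 ≤ E := Real.one_le_exp (by positivity)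
  set A := N * Real.exp (R * (T + τbar - t₀ + τbar)) with hA
  have hAp : 0 < A := by positivity
  have hAρ : A ≤ ρ := by nlinarith
  have hder' : ∀ t > t₀, HasDerivAt (fun s => -u s) (β t * (fun s => -G s) t) t := by
    intro t ht
    exact (hder t ht).neg.congr_deriv (by ring)
  have hG' : ∀ t ≥ t₀, ∀ m ≤ ρ, |(fun s => -u s) (t - τ t)| ≤ m → |(fun s => -u s) (t - σ t)| ≤ m →
      |(fun s => -G s) t - δ * ((fun s => -u s) (t - τ t) - L * (fun s => -u s) (t - σ t)
        - (fun s => -u s) t)| ≤ η * m := by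
    intro t ht m hm h1 h2
    simp only [abs_neg] at h1 h2
    have := hG t ht m hm h1 h2
    rw [← abs_neg] at this
    refine le_of_eq_of_le ?_ this
    congr 1
    ring
  -- phase one
  let g1 : ℝ → ℝ := fun t => N * Real.exp (R * (t - t₀ + τbar))
  have hg1c : Continuous g1 := by fun_prop
  have hg1m : Monotone g1 := by
    intro s t hst
    simp only [g1]
    gcongr
  have hg1d : ∀ t, HasDerivAt g1 (R * g1 t) t := by
    intro t
    have h1 : HasDerivAt (fun t => R * (t - t₀ + τbar)) (R * 1) t :=
      (((hasDerivAt_id t).sub_const t₀).add_const τbar).const_mul R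
    exact (h1.exp.const_mul N).congr_deriv (by simp only [g1]; ring)
  have hg1p : ∀ t, 0 < g1 t := fun t => by positivity
  have ph1 : ∀ s ∈ Icc (t₀ - τbar) (T + τbar), |u s| < g1 s := by
    refine nich_fence u g1 (t₀ - τbar) t₀ (T + τbar) (by linarith) huc hg1c ?_ ?_
    · intro s hs
      refine (hN0 s hs).trans_le ?_
      have : 1 ≤ Real.exp (R * (s - t₀ + τbar)) :=
        Real.one_le_exp (mul_nonneg hRp.le (by linarith [hs.1]))
      simp only [g1]
      nlinarith
    · intro t ht1 ht2 hprev he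
      have hgρ : g1 t ≤ ρ := (hg1m ht2).trans hAρ
      rcases eq_or_eq_neg_of_abs_eq he with h | h
      · exact nich_step1 u G β τ σ g1 δ L η ρ t₀ τbar B t hδ hL hη
          (fun s hs => hβm.le.trans (hβ0 s hs)) hβB hτ0 hσ0 hder hG ht1 (hg1d t) hg1m (hg1p t)
          hgρ hprev h
      · exact nich_step1 (fun s => -u s) (fun s => -G s) β τ σ g1 δ L η ρ t₀ τbar B t hδ hL hη
          (fun s hs => hβm.le.trans (hβ0 s hs)) hβB hτ0 hσ0 hder' hG' ht1 (hg1d t) hg1m (hg1p t)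
          hgρ (fun s hs => by simpa using hprev s hs) (by simp [h])
  -- phase two
  let g2 : ℝ → ℝ := fun t => A * Real.exp (-lam * (t - (T + τbar)))
  have hg2c : Continuous g2 := by fun_prop
  have hg2d : ∀ t, HasDerivAt g2 (-lam * g2 t) t := by
    intro t
    have h1 : HasDerivAt (fun t => -lam * (t - (T + τbar))) (-lam * 1) t :=
      ((hasDerivAt_id t).sub_const (T + τbar)).const_mul (-lam)
    exact (h1.exp.const_mul A).congr_deriv (by simp only [g2]; ring)
  have hg2p : ∀ t, 0 < g2 t := fun t => by positivity
  have hg2E : ∀ t s, t - 2 * τbar ≤ s → s ≤ t → g2 s ≤ E * g2 t := by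
    intro t s h1 h2
    have : E * g2 t = A * Real.exp (2 * lam * τbar + -lam * (t - (T + τbar))) := by
      rw [Real.exp_add]; simp only [g2, hEd]; ring
    rw [this]
    simp only [g2]
    gcongr
    nlinarith
  have hbase : ∀ s ∈ Icc (t₀ - τbar) (T + τbar), |u s| < g2 s := by
    intro s hs
    refine (ph1 s hs).trans_le ((hg1m hs.2).trans ?_)
    have : 1 ≤ Real.exp (-lam * (s - (T + τbar))) :=
      Real.one_le_exp (by nlinarith [hs.2])
    change A ≤ A * _
    nlinarith
  intro t ht
  refine (nich_fence u g2 (t₀ - τbar) (T + τbar) t (by linarith) huc hg2c hbase ?_ t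
    ⟨by linarith, le_rfl⟩).le
  intro t ht1 _ hprev he
  have hgρ : E * g2 t ≤ ρ := by
    refine le_trans ?_ hNρ
    have : Real.exp (-lam * (t - (T + τbar))) ≤ 1 :=
      Real.exp_le_one_iff.2 (by nlinarith)
    have : g2 t ≤ A := by
      change A * _ ≤ A
      nlinarith
    gcongr
  rcases eq_or_eq_neg_of_abs_eq he with h | h
  · exact nich_step2 u G β τ σ g2 δ L η ρ t₀ τbar T c E lam βm t hδ hL hη hβm hβ0 hβc hτ0 hσ0
      hder hG hT ht1 (hc t (by linarith)) hE hlam hΦ (hg2d t) (hg2E t) (hg2p t) hgρ hprev h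
  · exact nich_step2 (fun s => -u s) (fun s => -G s) β τ σ g2 δ L η ρ t₀ τbar T c E lam βm t
      hδ hL hη hβm hβ0 hβc hτ0 hσ0
      hder' hG' hT ht1 (hc t (by linarith)) hE hlam hΦ (hg2d t) (hg2E t) (hg2p t) hgρ
      (fun s hs => by simpa using hprev s hs) (by simp [h])

open Set Filter Topology in
lemma nich_params (δ L c τbar βm : ℝ) (hδ : 0 < δ) (hL : 0 < L) (hβm : 0 < βm)
    (hc : δ * (2 + L) * c < 1) :
    ∃ η > 0, ∃ lam > 0, βm * (δ * (Real.exp (2 * lam * τbar) - 1 - L +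
      L * (δ * (2 + L) + η) * c * Real.exp (2 * lam * τbar)) + η * Real.exp (2 * lam * τbar))
        < -lam := by
  let f : ℝ → ℝ := fun y => βm * (δ * (Real.exp (2 * y * τbar) - 1 - L +
      L * (δ * (2 + L) + y) * c * Real.exp (2 * y * τbar)) + y * Real.exp (2 * y * τbar)) + y
  have hf : Continuous f := by fun_prop
  have hf0 : f 0 < 0 := by
    have : f 0 = -(βm * δ * L * (1 - δ * (2 + L) * c)) := by simp [f]; ring
    rw [this]
    have : 0 < 1 - δ * (2 + L) * c := by linarith
    have : 0 < βm * δ * L * (1 - δ * (2 + L) * c) := by positivity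
    linarith
  have h1 : ∀ᶠ y in 𝓝[>] (0:ℝ), f y < 0 :=
    (hf.continuousAt.eventually_lt_const hf0).filter_mono nhdsWithin_le_nhds
  obtain ⟨y, hy, hy0⟩ := (h1.and self_mem_nhdsWithin).exists
  exact ⟨y, hy0, y, hy0, by simp only [f] at hy; linarith⟩

open Set Filter Topology in
lemma nich_limsup (β σ : ℝ → ℝ) (t₀ τbar B C : ℝ) (hβc : ContinuousOn β (Ici t₀))
    (hβB : ∀ t ≥ t₀, β t ≤ B) (hB : 0 < B)
    (hσ0 : ∀ t ≥ t₀, 0 ≤ σ t ∧ σ t ≤ τbar)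
    (hcond : limsup (fun t => ∫ s in (t - σ t)..t, β s) atTop < C) :
    ∃ c < C, ∃ T > t₀, ∀ t ≥ T, ∫ s in (t - σ t)..t, β s ≤ c := by
  obtain ⟨c, hc1, hc2⟩ := exists_between hcond
  have hbd : IsBoundedUnder (· ≤ ·) atTop (fun t => ∫ s in (t - σ t)..t, β s) := by
    refine ⟨B * τbar, ?_⟩
    rw [eventually_map]
    filter_upwards [eventually_ge_atTop (t₀ + τbar)] with t ht
    have hτb : 0 ≤ τbar := (hσ0 t₀ le_rfl).1.trans (hσ0 t₀ le_rfl).2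
    obtain ⟨a1, a2⟩ := hσ0 t (by linarith)
    have hle : t - σ t ≤ t := by linarith
    have : ∫ s in (t - σ t)..t, β s ≤ ∫ s in (t - σ t)..t, B := by
      refine intervalIntegral.integral_mono_on hle ?_ (by simp) ?_
      · apply ContinuousOn.intervalIntegrable
        apply hβc.mono
        rw [uIcc_of_le hle]
        intro y hy
        have := hy.1
        simp only [mem_Ici]; linarith
      · intro y hy
        exact hβB y (by linarith [hy.1])
    refine this.trans ?_
    rw [intervalIntegral.integral_const, smul_eq_mul]
    nlinarith
  have hev := eventually_lt_of_limsup_lt hc1 hbd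
  obtain ⟨T, hT⟩ := eventually_atTop.1 hev
  exact ⟨c, hc2, max T (t₀ + 1), lt_of_lt_of_le (by linarith) (le_max_right _ _),
    fun t ht => (hT t ((le_max_left _ _).trans ht)).le⟩

theorem nicholson_one_pair_local_exponential_stability
    (p a δ : ℝ) (hδ : 0 < δ) (hpδ : δ < p) (ha : 0 < a)
    (t₀ : ℝ) (β τ σ : ℝ → ℝ)
    (hβc : ContinuousOn β (Set.Ici t₀))
    (hτc : ContinuousOn τ (Set.Ici t₀)) (hσc : ContinuousOn σ (Set.Ici t₀))
    (hτ0 : ∀ t ∈ Set.Ici t₀, 0 ≤ τ t) (hσ0 : ∀ t ∈ Set.Ici t₀, 0 ≤ σ t)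
    (βminus : ℝ) (hβminus : IsGLB (β '' Set.Ici t₀) βminus) (hβmpos : 0 < βminus)
    (hβub : ∃ B, ∀ t ∈ Set.Ici t₀, β t ≤ B)
    (τbar : ℝ) (hτbar : IsLUB (τ '' Set.Ici t₀ ∪ σ '' Set.Ici t₀) τbar)
    -- K = (1/a) log(p/δ)
    (K : ℝ) (hKdef : K = (1 / a) * Real.log (p / δ))
    -- the stability condition
    (hcond : Filter.limsup (fun t => ∫ s in (t - σ t)..t, β s) Filter.atTop
      < 1 / (δ * (2 + Real.log (p / δ)))) :
    -- K is locally exponentially stable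
    ∃ ε > 0, ∃ M ≥ (1 : ℝ), ∃ lam > 0, ∀ x : ℝ → ℝ,
      NicholsonSolution1 p a δ t₀ τbar β τ σ x →
      sSup ((fun s => |x s - K|) '' Set.Icc (t₀ - τbar) t₀) ≤ ε →
      ∀ t ∈ Set.Ici t₀, |x t - K| ≤
        M * Real.exp (-lam * (t - t₀)) *
          sSup ((fun s => |x s - K|) '' Set.Icc (t₀ - τbar) t₀) := by
  obtain ⟨B, hB⟩ := hβub
  set L := Real.log (p / δ) with hLd
  have hp : 0 < p := hδ.trans hpδ
  have hL : 0 < L := Real.log_pos (by rw [lt_div_iff₀ hδ]; linarith)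
  have hK : 0 < K := by rw [hKdef]; positivity
  have hLK : L = a * K := by rw [hKdef]; field_simp
  have hpe : p * Real.exp (-a * K) = δ := by
    rw [neg_mul, ← hLK, Real.exp_neg, hLd, Real.exp_log (by positivity)]
    field_simp
  have hτ' : ∀ t ≥ t₀, 0 ≤ τ t ∧ τ t ≤ τbar := fun t ht =>
    ⟨hτ0 t ht, hτbar.1 (Or.inl ⟨t, ht, rfl⟩)⟩
  have hσ' : ∀ t ≥ t₀, 0 ≤ σ t ∧ σ t ≤ τbar := fun t ht =>
    ⟨hσ0 t ht, hτbar.1 (Or.inr ⟨t, ht, rfl⟩)⟩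
  have hβ0 : ∀ t ≥ t₀, βminus ≤ β t := fun t ht => hβminus.1 ⟨t, ht, rfl⟩
  have hτb : 0 ≤ τbar := (hτ' t₀ le_rfl).1.trans (hτ' t₀ le_rfl).2
  have hBp : 0 < B := hβmpos.trans_le ((hβ0 t₀ le_rfl).trans (hB t₀ Set.self_mem_Ici))
  obtain ⟨c, hcC, T, hT, hcT⟩ := nich_limsup β σ t₀ τbar B _ hβc hB hBp hσ' hcond
  have hc1 : δ * (2 + L) * c < 1 := by
    rw [lt_div_iff₀ (by positivity)] at hcC
    linarith
  obtain ⟨η, hη, lam, hlam, hΦ⟩ := nich_params δ L c τbar βminus hδ hL hβmpos hc1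
  set Q := δ * (K * a ^ 2 + 2 * a) with hQd
  have hQ : 0 < Q := by positivity
  set ρ := min (1 / a) (η / Q) with hρd
  have hρ : 0 < ρ := by positivity
  set W := Real.exp ((B * (δ * (2 + L) + η) + 1) * (T + τbar - t₀ + τbar)) with hWd
  have hW1 : 1 ≤ W := Real.one_le_exp
    (mul_nonneg (by positivity) (by linarith))
  set E := Real.exp (2 * lam * τbar) with hEd
  have hEp : 0 < E := Real.exp_pos _
  have hV1 : 1 ≤ Real.exp (lam * (T + τbar - t₀)) :=
    Real.one_le_exp (mul_nonneg hlam.le (by linarith))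
  refine ⟨ρ / (E * W) / 2, by positivity, W * Real.exp (lam * (T + τbar - t₀)), by nlinarith,
    lam, hlam, ?_⟩
  intro x hx hn t ht
  obtain ⟨hxc, hxd, -, -⟩ := hx
  set n := sSup ((fun s => |x s - K|) '' Set.Icc (t₀ - τbar) t₀) with hnd
  have huc : ContinuousOn (fun s => x s - K) (Set.Ici (t₀ - τbar)) := hxc.sub continuousOn_const
  have hbdd : BddAbove ((fun s => |x s - K|) '' Set.Icc (t₀ - τbar) t₀) :=
    (isCompact_Icc.image_of_continuousOn ((huc.mono Set.Icc_subset_Ici_self).abs)).bddAbove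
  have hinit : ∀ s ∈ Set.Icc (t₀ - τbar) t₀, |x s - K| ≤ n := fun s hs =>
    le_csSup hbdd ⟨s, hs, rfl⟩
  have hn0 : 0 ≤ n := (abs_nonneg _).trans (hinit t₀ ⟨by linarith, le_rfl⟩)
  have key : ∀ N, n < N → N ≤ ρ / (E * W) →
      |x t - K| ≤ N * W * Real.exp (-lam * (t - (T + τbar))) := by
    intro N hnN hNρ
    refine nich_combine (fun s => x s - K)
      (fun s => p * x (s - τ s) * Real.exp (-a * x (s - σ s)) - δ * x s) β τ σ δ L η ρ t₀ τbar T c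
      lam βminus B N hδ hL hη hβmpos hβ0 hB hβc hτ' hσ' huc ?_ ?_ hT hcT hlam hΦ
      (hn0.trans_lt hnN) (fun s hs => (hinit s hs).trans_lt hnN) ?_ t ht
    · intro s hs
      exact ((hxd s hs.le).hasDerivAt (Ici_mem_nhds hs)).sub_const K
    · intro s _ m hm h1 h2
      have hm0 : 0 ≤ m := (abs_nonneg _).trans h1
      have hma : a * m ≤ 1 := by
        have := hm.trans (min_le_left _ _)
        rw [le_div_iff₀ ha] at this; linarith
      have hmq : Q * m ≤ η := by
        have := hm.trans (min_le_right _ _)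
        rw [le_div_iff₀ hQ] at this; linarith
      have := nich_lin p a δ K L m _ _ hδ ha hK hLK hpe h1 h2 hma
      simp only [add_sub_cancel] at this
      refine le_trans (le_of_eq_of_le ?_ this) ?_
      · congr 1; ring
      · nlinarith
    · rw [le_div_iff₀ (by positivity)] at hNρ
      linarith
  have heps : n < ρ / (E * W) := by
    have : 0 < ρ / (E * W) := by positivity
    linarith
  have hfin : |x t - K| ≤ n * W * Real.exp (-lam * (t - (T + τbar))) := by
    have hcont : Filter.Tendsto (fun N : ℝ => N * W * Real.exp (-lam * (t - (T + τbar))))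
        (nhdsWithin n (Set.Ioi n)) (nhds (n * W * Real.exp (-lam * (t - (T + τbar))))) := by
      have : Continuous (fun N : ℝ => N * W * Real.exp (-lam * (t - (T + τbar)))) := by fun_prop
      exact this.continuousAt.tendsto.mono_left nhdsWithin_le_nhds
    refine ge_of_tendsto hcont ?_
    filter_upwards [Ioo_mem_nhdsGT heps] with N hN
    exact key N hN.1 hN.2.le
  refine hfin.trans (le_of_eq ?_)
  have : Real.exp (-lam * (t - (T + τbar)))
      = Real.exp (lam * (T + τbar - t₀)) * Real.exp (-lam * (t - t₀)) := by
    rw [← Real.exp_add]; congr 1; ring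
  rw [this]; ring
end

section
/- (Theorem 3.1.) Consider the one-pair Nicholson equation x'(t) = β(t)(p x(t−τ(t)) e^{−a x(t−σ(t))} − δ x(t)) with p > δ > 0, a > 0, and set ζ_M := limsup_{t→∞} ∫_{t−σ(t)}^{t} β(s) ds. If (e^{δζ_M} − 1)·log(p/δ) ≤ 1, then the positive equilibrium K = (1/a) log(p/δ) is globally attractive: every solution x with admissible initial data satisfies lim_{t→∞} x(t) = K. -/
open Set Filter Topology

theorem nich_deriv_nonneg {f : ℝ → ℝ} {f' s t : ℝ} (hst : s < t) (hf : HasDerivAt f f' t)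
    (h : ∀ u ∈ Icc s t, f u ≤ f t) : 0 ≤ f' := by
  have h1 : HasDerivWithinAt f f' (Iio t) t := hf.hasDerivWithinAt
  rw [hasDerivWithinAt_iff_tendsto_slope' (by simp)] at h1
  refine ge_of_tendsto h1 ?_
  filter_upwards [Ioo_mem_nhdsLT hst] with u hu
  rw [slope_def_field]
  apply div_nonneg_of_nonpos
  · linarith [h u ⟨hu.1.le, hu.2.le⟩]
  · linarith [hu.2]

theorem nich_deriv_nonpos_s8 {f : ℝ → ℝ} {f' s t : ℝ} (hst : s < t) (hf : HasDerivAt f f' t)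
    (h : ∀ u ∈ Icc s t, f t ≤ f u) : f' ≤ 0 := by
  have := nich_deriv_nonneg hst hf.neg (fun u hu => by simpa using h u hu)
  linarith

/-- drop lemma -/
theorem nich_drop {f f' : ℝ → ℝ} {T c η L : ℝ} (hη : 0 < η)
    (hf : ∀ t, T ≤ t → HasDerivAt f (f' t) t) (hL : ∀ t, T ≤ t → L ≤ f t)
    (h : ∀ t, T ≤ t → c ≤ f t → f' t ≤ -η) : ∀ᶠ t in atTop, f t ≤ c := by
  obtain ⟨T1, hT1, hc⟩ : ∃ T1, T ≤ T1 ∧ f T1 ≤ c := by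
    by_contra! hcon
    have key : ∀ t, T ≤ t → f t ≤ f T - η * (t - T) := by
      intro t ht
      have := image_le_of_deriv_right_le_deriv_boundary (f := f) (f' := f') (a := T) (b := t)
        (B := fun s => f T - η * (s - T)) (B' := fun _ => -η)
        (fun s hs => (hf s hs.1).continuousAt.continuousWithinAt)
        (fun s hs => (hf s hs.1).hasDerivWithinAt) (by simp)
        (by fun_prop)
        (fun s hs => by
          have : HasDerivAt (fun s => f T - η * (s - T)) (-η) s := by
            simpa using (((hasDerivAt_id s).sub_const T).const_mul η).const_sub (f T)
          exact this.hasDerivWithinAt)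
        (fun s hs => h s hs.1 (hcon s hs.1).le)
      exact this ⟨ht, le_refl _⟩
    have h0 := hL T le_rfl
    have hd : 0 ≤ (f T - L + 1) / η := by apply div_nonneg <;> linarith
    have h1 := key (T + (f T - L + 1) / η) (by linarith)
    have h2 := hL (T + (f T - L + 1) / η) (by linarith)
    have h3 : η * (T + (f T - L + 1) / η - T) = f T - L + 1 := by field_simp; ring
    linarith
  filter_upwards [eventually_ge_atTop T1] with t ht
  have := image_le_of_deriv_right_lt_deriv_boundary (f := f) (f' := f') (a := T1) (b := t)
        (B := fun _ => c) (B' := fun _ => 0)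
        (fun s hs => (hf s (hT1.trans hs.1)).continuousAt.continuousWithinAt)
        (fun s hs => (hf s (hT1.trans hs.1)).hasDerivWithinAt) hc
        (fun s => hasDerivAt_const _ _)
        (fun s hs he => by linarith [h s (hT1.trans hs.1) he.ge])
  exact this ⟨ht, le_refl _⟩

theorem nich_phi {u : ℝ} (hu : 0 < u) : 0 < (u - 2) * Real.exp u + u + 2 := by
  have hd : ∀ v, HasDerivAt (fun u : ℝ => (u - 2) * Real.exp u + u + 2)
      ((v - 1) * Real.exp v + 1) v := by
    intro v
    have := (((((hasDerivAt_id v).sub_const 2).mul (Real.hasDerivAt_exp v)).add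
      (hasDerivAt_id v)).add_const 2)
    refine HasDerivAt.congr_deriv this ?_
    show 1 * Real.exp v + (v - 2) * Real.exp v + 1 = _
    ring
  have hm : StrictMonoOn (fun u : ℝ => (u - 2) * Real.exp u + u + 2) (Ici 0) := by
    apply strictMonoOn_of_deriv_pos (convex_Ici 0)
    · exact fun v _ => (hd v).continuousAt.continuousWithinAt
    · intro v hv
      rw [interior_Ici] at hv
      rw [(hd v).deriv]
      have h1 : -v + 1 < Real.exp (-v) := Real.add_one_lt_exp (by simpa using (ne_of_gt hv))
      have h2 : Real.exp (-v) * Real.exp v = 1 := by rw [← Real.exp_add]; simp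
      nlinarith [Real.exp_pos v]
  have := hm (mem_Ici.2 le_rfl) (mem_Ici.2 hu.le) hu
  simpa using this

theorem nich_phi' {u : ℝ} (hu : 0 < u) : 1 / u < 1 / (Real.exp u - 1) + 1 / 2 := by
  have h := nich_phi hu
  have h1 : 0 < Real.exp u - 1 := by linarith [Real.add_one_lt_exp hu.ne']
  rw [div_add_div _ _ h1.ne' two_ne_zero, div_lt_div_iff₀ hu (by positivity)]
  linarith

theorem nich_alg {K I S E : ℝ} (hK : 0 < K) (hI : 0 < I) (hIS : I ≤ S) (hE1 : 1 ≤ E)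
    (hc : (E - 1) * K ≤ 1)
    (hS : S ≤ max K (Real.exp (K - I) * S + (K - Real.exp (K - I) * S) * E⁻¹))
    (hI' : min K (Real.exp (K - S) * I + (K - Real.exp (K - S) * I) * E⁻¹) ≤ I) :
    I = K ∧ S = K := by
  have hE : 0 < E := by linarith
  have hS0 : 0 < S := hI.trans_le hIS
  have e1 : S ≤ Real.exp (K - I) * S + (K - Real.exp (K - I) * S) * E⁻¹ →
      S * E ≤ K + Real.exp (K - I) * S * (E - 1) := by
    intro h
    have h := mul_le_mul_of_nonneg_right h hE.le
    have : (Real.exp (K - I) * S + (K - Real.exp (K - I) * S) * E⁻¹) * E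
      = K + Real.exp (K - I) * S * (E - 1) := by field_simp; ring
    linarith
  have e2 : Real.exp (K - S) * I + (K - Real.exp (K - S) * I) * E⁻¹ ≤ I →
      K + Real.exp (K - S) * I * (E - 1) ≤ I * E := by
    intro h
    have h := mul_le_mul_of_nonneg_right h hE.le
    have : (Real.exp (K - S) * I + (K - Real.exp (K - S) * I) * E⁻¹) * E
      = K + Real.exp (K - S) * I * (E - 1) := by field_simp; ring
    linarith
  -- weaken to c = 1/K
  have f1 : K < S → I ≤ K → S * (K - (Real.exp (K - I) - 1)) ≤ K ^ 2 := by
    intro h h2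
    have := e1 (by rcases le_max_iff.1 hS with h' | h' <;> linarith)
    have hA : 0 ≤ Real.exp (K - I) - 1 := by linarith [Real.add_one_le_exp (K - I)]
    have := mul_le_mul_of_nonneg_right hc (mul_nonneg hS0.le hA)
    nlinarith
  have f2 : I < K → K ≤ S → K ^ 2 ≤ I * (K + (1 - Real.exp (K - S))) := by
    intro h h2
    have := e2 (by rcases min_le_iff.1 hI' with h' | h' <;> linarith)
    have hB : 0 ≤ 1 - Real.exp (K - S) := by
      have : Real.exp (K - S) ≤ 1 := Real.exp_le_one_iff.2 (by linarith)
      linarith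
    have := mul_le_mul_of_nonneg_right hc (mul_nonneg hI.le hB)
    nlinarith
  rcases le_or_gt S K with hSK | hSK
  · rcases le_or_gt K I with hIK | hIK
    · constructor <;> linarith
    · exfalso
      rcases min_le_iff.1 hI' with h' | h'
      · linarith
      have h1 : 1 ≤ Real.exp (K - S) := by linarith [Real.add_one_le_exp (K - S)]
      have h3 := e2 h'
      nlinarith [mul_nonneg (mul_nonneg hI.le (sub_nonneg.2 hE1)) (sub_nonneg.2 h1)]
  · rcases le_or_gt K I with hIK | hIK
    · exfalso
      rcases le_max_iff.1 hS with h' | h'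
      · linarith
      have h1 : Real.exp (K - I) ≤ 1 := Real.exp_le_one_iff.2 (by linarith)
      have h3 := e1 h'
      nlinarith [mul_nonneg (mul_nonneg hS0.le (sub_nonneg.2 hE1)) (sub_nonneg.2 h1)]
    · exfalso
      have g1 := f1 hSK hIK.le
      have g2 := f2 hIK hSK.le
      obtain ⟨i, rfl⟩ : ∃ i, I = K - i := ⟨K - I, by ring⟩
      obtain ⟨s, rfl⟩ : ∃ s, S = K + s := ⟨S - K, by ring⟩
      have hi : 0 < i := by linarith
      have hs : 0 < s := by linarith
      have p1 := nich_phi' hi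
      have p2 := nich_phi' hs
      rw [show K - (K - i) = i by ring] at g1
      rw [show K - (K + s) = -s by ring] at g2
      have hA : 0 < Real.exp i - 1 := by linarith [Real.add_one_lt_exp hi.ne']
      have hA' : 0 < Real.exp s - 1 := by linarith [Real.add_one_lt_exp hs.ne']
      have hB : 0 < 1 - Real.exp (-s) := by
        have : Real.exp (-s) < 1 := by simpa using hs
        linarith
      have hBeq : 1 / (1 - Real.exp (-s)) = 1 + 1 / (Real.exp s - 1) := by
        rw [Real.exp_neg]
        have := Real.exp_pos s
        have h5 : 1 - (Real.exp s)⁻¹ = (Real.exp s - 1) / Real.exp s := by field_simp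
        rw [h5]; field_simp; ring
      generalize Real.exp i - 1 = A at *
      generalize 1 - Real.exp (-s) = B at *
      have q1 : 1 / A ≤ 1 / K + 1 / s := by
        rw [div_add_div _ _ hK.ne' hs.ne', div_le_div_iff₀ hA (by positivity)]
        nlinarith
      have q2 : 1 / K + 1 / B ≤ 1 / i := by
        rw [div_add_div _ _ hK.ne' hB.ne', div_le_div_iff₀ (by positivity) hi]
        nlinarith
      linarith

structure NichCore (t₀ r K b₀ B : ℝ) (b H τ σ x : ℝ → ℝ) : Prop where
  hK : 0 < K
  hb₀ : 0 < b₀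
  hb : ∀ t, b₀ ≤ b t
  hB : ∀ t, b t ≤ B
  hr : 0 ≤ r
  hH : ∀ t, HasDerivAt H (b t) t
  hτ : ∀ t, t₀ ≤ t → 0 ≤ τ t ∧ τ t ≤ r
  hσ : ∀ t, t₀ ≤ t → 0 ≤ σ t ∧ σ t ≤ r
  hx : ContinuousOn x (Ici (t₀ - r))
  hd : ∀ t, t₀ < t → HasDerivAt x (b t * (x (t - τ t) * Real.exp (K - x (t - σ t)) - x t)) t
  h0 : ∀ s, t₀ - r ≤ s → s < t₀ → 0 ≤ x s
  h1 : 0 < x t₀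

namespace NichCore

variable {t₀ r K b₀ B : ℝ} {b H τ σ x : ℝ → ℝ}

theorem Hmono (h : NichCore t₀ r K b₀ B b H τ σ x) {s t : ℝ} (hst : s ≤ t) : 0 ≤ H t - H s := by
  have : Monotone H := monotone_of_deriv_nonneg (fun t => (h.hH t).differentiableAt)
    (fun t => by rw [(h.hH t).deriv]; exact h.hb₀.le.trans (h.hb t))
  linarith [this hst]

theorem Hlip (h : NichCore t₀ r K b₀ B b H τ σ x) {s t : ℝ} (hst : s ≤ t) :
    H t - H s ≤ B * (t - s) :=
  image_sub_le_mul_sub_of_deriv_le (fun t => (h.hH t).differentiableAt)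
    (fun t => by rw [(h.hH t).deriv]; exact h.hB t) hst

theorem hasD (h : NichCore t₀ r K b₀ B b H τ σ x) (N : ℝ) {t : ℝ} (ht : t₀ < t) :
    HasDerivAt (fun u => (x u - N) * Real.exp (H u))
      (Real.exp (H t) * b t * (x (t - τ t) * Real.exp (K - x (t - σ t)) - N)) t := by
  refine HasDerivAt.congr_deriv (((h.hd t ht).sub_const N).mul (h.hH t).exp) ?_
  ring

theorem winU (h : NichCore t₀ r K b₀ B b H τ σ x) {N s t : ℝ} (hs : t₀ ≤ s) (hst : s ≤ t)
    (hN : ∀ u, s < u → u < t → x (u - τ u) * Real.exp (K - x (u - σ u)) ≤ N) :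
    x t ≤ N + (x s - N) * Real.exp (-(H t - H s)) := by
  have hr := h.hr
  have hm : AntitoneOn (fun u => (x u - N) * Real.exp (H u)) (Icc s t) := by
    apply antitoneOn_of_deriv_nonpos (convex_Icc s t)
    · have : Continuous H := continuous_iff_continuousAt.2 fun t => (h.hH t).continuousAt
      exact ((h.hx.mono (fun u hu => by simp only [mem_Ici]; linarith [hu.1])).sub
        continuousOn_const).mul (Real.continuous_exp.comp this).continuousOn
    · intro u hu
      rw [interior_Icc] at hu
      exact (h.hasD N (hs.trans_lt hu.1)).differentiableAt.differentiableWithinAt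
    · intro u hu
      rw [interior_Icc] at hu
      rw [(h.hasD N (hs.trans_lt hu.1)).deriv]
      have := hN u hu.1 hu.2
      have hbu := h.hb₀.trans_le (h.hb u)
      exact mul_nonpos_of_nonneg_of_nonpos (by positivity) (by linarith)
  have h2 : (x t - N) * Real.exp (H t) ≤ (x s - N) * Real.exp (H s) :=
    hm ⟨le_rfl, hst⟩ ⟨hst, le_rfl⟩ hst
  have h3 : Real.exp (-(H t - H s)) * Real.exp (H t) = Real.exp (H s) := by
    rw [← Real.exp_add]; congr 1; ring
  have h4 : (x t - N) * Real.exp (H t) ≤ ((x s - N) * Real.exp (-(H t - H s))) * Real.exp (H t) := by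
    rw [mul_assoc, h3]; exact h2
  have := le_of_mul_le_mul_right h4 (Real.exp_pos _)
  linarith

theorem winL (h : NichCore t₀ r K b₀ B b H τ σ x) {N s t : ℝ} (hs : t₀ ≤ s) (hst : s ≤ t)
    (hN : ∀ u, s < u → u < t → N ≤ x (u - τ u) * Real.exp (K - x (u - σ u))) :
    N + (x s - N) * Real.exp (-(H t - H s)) ≤ x t := by
  have hr := h.hr
  have hm : MonotoneOn (fun u => (x u - N) * Real.exp (H u)) (Icc s t) := by
    apply monotoneOn_of_deriv_nonneg (convex_Icc s t)
    · have : Continuous H := continuous_iff_continuousAt.2 fun t => (h.hH t).continuousAt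
      exact ((h.hx.mono (fun u hu => by simp only [mem_Ici]; linarith [hu.1])).sub
        continuousOn_const).mul (Real.continuous_exp.comp this).continuousOn
    · intro u hu
      rw [interior_Icc] at hu
      exact (h.hasD N (hs.trans_lt hu.1)).differentiableAt.differentiableWithinAt
    · intro u hu
      rw [interior_Icc] at hu
      rw [(h.hasD N (hs.trans_lt hu.1)).deriv]
      have := hN u hu.1 hu.2
      have hbu := h.hb₀.trans_le (h.hb u)
      exact mul_nonneg (by positivity) (by linarith)
  have h2 : (x s - N) * Real.exp (H s) ≤ (x t - N) * Real.exp (H t) :=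
    hm ⟨le_rfl, hst⟩ ⟨hst, le_rfl⟩ hst
  have h3 : Real.exp (-(H t - H s)) * Real.exp (H t) = Real.exp (H s) := by
    rw [← Real.exp_add]; congr 1; ring
  have h4 : ((x s - N) * Real.exp (-(H t - H s))) * Real.exp (H t) ≤ (x t - N) * Real.exp (H t) := by
    rw [mul_assoc, h3]; exact h2
  have := le_of_mul_le_mul_right h4 (Real.exp_pos _)
  linarith

theorem pos (h : NichCore t₀ r K b₀ B b H τ σ x) {t : ℝ} (ht : t₀ ≤ t) : 0 < x t := by
  by_contra! hcon
  have hr := h.hr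
  have hcont : ContinuousOn x (Icc t₀ t) :=
    h.hx.mono (fun u hu => by simp only [mem_Ici]; linarith [hu.1])
  have hcl : IsClosed (Icc t₀ t ∩ x ⁻¹' Iic 0) :=
    hcont.preimage_isClosed_of_isClosed isClosed_Icc isClosed_Iic
  have hcp : IsCompact (Icc t₀ t ∩ x ⁻¹' Iic 0) :=
    isCompact_Icc.of_isClosed_subset hcl inter_subset_left
  obtain ⟨u, ⟨hu, hu0⟩, hmin⟩ := hcp.exists_isLeast ⟨t, ⟨ht, le_rfl⟩, hcon⟩
  have hbefore : ∀ v, t₀ - r ≤ v → v < u → 0 ≤ x v := by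
    intro v hv hvu
    rcases lt_or_ge v t₀ with h' | h'
    · exact h.h0 v hv h'
    · by_contra! hneg
      have := hmin ⟨⟨h', hvu.le.trans hu.2⟩, hneg.le⟩
      linarith
  have := h.winL (N := 0) le_rfl hu.1 (fun v hv hvu => by
    have := h.hτ v hv.le
    exact mul_nonneg (hbefore _ (by linarith) (by linarith)) (Real.exp_pos _).le)
  have h2 : 0 < x t₀ * Real.exp (-(H u - H t₀)) := mul_pos h.h1 (Real.exp_pos _)
  have h3 : x u ≤ 0 := hu0
  simp only [zero_add, sub_zero] at this
  linarith

theorem nonneg (h : NichCore t₀ r K b₀ B b H τ σ x) {t : ℝ} (ht : t₀ - r ≤ t) : 0 ≤ x t := by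
  rcases lt_or_ge t t₀ with h' | h'
  · exact h.h0 t ht h'
  · exact (h.pos h').le

theorem decay (h : NichCore t₀ r K b₀ B b H τ σ x) {s t : ℝ} (hs : t₀ ≤ s) (hst : s ≤ t) :
    x s * Real.exp (-(H t - H s)) ≤ x t := by
  have := h.winL (N := 0) hs hst (fun v hv hvu => by
    have := h.hτ v (by linarith)
    exact mul_nonneg (h.nonneg (by linarith)) (Real.exp_pos _).le)
  simpa using this

theorem persist (h : NichCore t₀ r K b₀ B b H τ σ x) : ∃ m, 0 < m ∧ ∀ t, t₀ ≤ t → m ≤ x t := by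
  have hr := h.hr
  have hK := h.hK
  have hc : ∀ t, ContinuousOn x (Icc t₀ t) := fun t =>
    h.hx.mono (fun u hu => by simp only [mem_Ici]; linarith [hu.1])
  obtain ⟨w, hw, hwmin⟩ := isCompact_Icc.exists_isMinOn (nonempty_Icc.2 (by linarith : t₀ ≤ t₀ + r))
    (hc (t₀ + r))
  refine ⟨min (x w) (K * Real.exp (-(B * r))), lt_min (h.pos hw.1) (by positivity), ?_⟩
  intro t1 ht1
  obtain ⟨t, ht, htmin⟩ := isCompact_Icc.exists_isMinOn (nonempty_Icc.2 ht1) (hc t1)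
  have hmin : ∀ u ∈ Icc t₀ t1, x t ≤ x u := fun u hu => htmin hu
  refine le_trans ?_ (hmin t1 ⟨ht1, le_rfl⟩)
  rcases le_or_gt t (t₀ + r) with htr | htr
  · exact (min_le_left _ _).trans (hwmin (⟨ht.1, htr⟩ : t ∈ Icc t₀ (t₀ + r)))
  · refine (min_le_right _ _).trans ?_
    have htt : t₀ < t := by linarith
    have hτ := h.hτ t ht.1
    have hσ := h.hσ t ht.1
    have hd := nich_deriv_nonpos_s8 htt (h.hd t htt) (fun u hu => hmin u ⟨hu.1, hu.2.trans ht.2⟩)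
    have hbt := h.hb₀.trans_le (h.hb t)
    have hF : x (t - τ t) * Real.exp (K - x (t - σ t)) - x t ≤ 0 := by
      by_contra! hh
      have := mul_pos hbt hh
      linarith
    have hle := hmin (t - τ t) ⟨by linarith, by linarith [ht.2]⟩
    have hp := h.pos (t := t - τ t) (by linarith)
    have hKle : K ≤ x (t - σ t) := by
      by_contra! hh
      have : 1 < Real.exp (K - x (t - σ t)) := by simpa using hh
      nlinarith
    have hdec := h.decay (s := t - σ t) (t := t) (by linarith) (by linarith)
    have hl := h.Hlip (s := t - σ t) (t := t) (by linarith)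
    have hB0 : 0 < B := hbt.trans_le (h.hB t)
    have hl2 : B * (t - (t - σ t)) ≤ B * r := mul_le_mul_of_nonneg_left (by linarith) hB0.le
    calc K * Real.exp (-(B * r)) ≤ x (t - σ t) * Real.exp (-(H t - H (t - σ t))) := by
          apply mul_le_mul hKle (Real.exp_le_exp.2 (by linarith)) (Real.exp_pos _).le (by linarith)
      _ ≤ x t := hdec

theorem bdd (h : NichCore t₀ r K b₀ B b H τ σ x) : ∃ C, ∀ t, t₀ ≤ t → x t ≤ C := by
  have hr := h.hr
  have hK := h.hK
  have hB0 : 0 < B := h.hb₀.trans_le ((h.hb t₀).trans (h.hB t₀))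
  have hc : ∀ t, ContinuousOn x (Icc (t₀ - r) t) := fun t =>
    h.hx.mono (fun u hu => by simp only [mem_Ici]; linarith [hu.1])
  obtain ⟨w, hw, hwmax⟩ := isCompact_Icc.exists_isMaxOn
    (nonempty_Icc.2 (by linarith : t₀ - r ≤ t₀ + 2 * r)) (hc (t₀ + 2 * r))
  obtain ⟨l, hl⟩ : ∃ l, l = B * Real.exp K + 1 := ⟨_, rfl⟩
  have hl0 : 0 < l := by rw [hl]; positivity
  refine ⟨max (x w) (K * Real.exp (B * (2 * r)) * Real.exp (l * (2 * r))), ?_⟩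
  intro t1 ht1
  obtain ⟨t, ht, htmax⟩ := isCompact_Icc.exists_isMaxOn
    (nonempty_Icc.2 (by linarith : t₀ - r ≤ t1)) (hc t1)
  have hmax : ∀ u ∈ Icc (t₀ - r) t1, x u ≤ x t := fun u hu => htmax hu
  refine le_trans (hmax t1 ⟨by linarith, le_rfl⟩) ?_
  rcases le_or_gt t (t₀ + 2 * r) with htr | htr
  · exact le_trans (hwmax (⟨ht.1, htr⟩ : t ∈ Icc (t₀ - r) (t₀ + 2 * r))) (le_max_left _ _)
  · refine le_trans ?_ (le_max_right _ _)
    have htt : t₀ < t := by linarith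
    have hτ := h.hτ t htt.le
    have hσ := h.hσ t htt.le
    have hd := nich_deriv_nonneg htt (h.hd t htt)
      (fun u hu => hmax u ⟨by linarith [hu.1], hu.2.trans ht.2⟩)
    have hbt := h.hb₀.trans_le (h.hb t)
    have hF : 0 ≤ x (t - τ t) * Real.exp (K - x (t - σ t)) - x t := by
      by_contra! hh
      have := mul_neg_of_pos_of_neg hbt hh
      linarith
    have hle := hmax (t - τ t) ⟨by linarith, by linarith [ht.2]⟩
    have hp := h.pos (t := t - τ t) (by linarith)
    have hKle : x (t - σ t) ≤ K := by
      by_contra! hh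
      have : Real.exp (K - x (t - σ t)) < 1 := by simpa using hh
      nlinarith
    -- weighted maximum
    have hcw : ContinuousOn (fun u => x u * Real.exp (-(l * u))) (Icc (t - 2 * r) t) :=
      (h.hx.mono (fun u hu => by simp only [mem_Ici]; linarith [hu.1])).mul
        (by fun_prop)
    obtain ⟨s, hs, hsmax⟩ := isCompact_Icc.exists_isMaxOn
      (nonempty_Icc.2 (by linarith : t - 2 * r ≤ t)) hcw
    have hsm : ∀ u ∈ Icc (t - 2 * r) t, x u * Real.exp (-(l * u)) ≤ x s * Real.exp (-(l * s)) :=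
      fun u hu => hsmax hu
    have hst : s ≤ t - σ t := by
      by_contra! hh
      have hs0 : t₀ < s := by linarith
      have hτs := h.hτ s hs0.le
      have hσs := h.hσ s hs0.le
      have hexp : HasDerivAt (fun u => Real.exp (-(l * u))) (Real.exp (-(l * s)) * (-l)) s := by
        have : HasDerivAt (fun u => -(l * u)) (-l) s := by
          exact HasDerivAt.congr_deriv ((hasDerivAt_id s).const_mul l).neg (by simp)
        exact this.exp
      have hd2 := nich_deriv_nonneg (s := t - 2 * r) (by linarith) ((h.hd s hs0).mul hexp)
        (fun u hu => hsm u ⟨hu.1, hu.2.trans hs.2⟩)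
      have hxs := h.pos hs0.le
      have hxτ := h.pos (t := s - τ s) (by linarith [hs.1])
      have hxσ := h.pos (t := s - σ s) (by linarith [hs.1])
      have h3 := hsm (s - τ s) ⟨by linarith, by linarith [hs.2]⟩
      have h4 : x (s - τ s) ≤ x s := by
        have h5 : Real.exp (-(l * s)) ≤ Real.exp (-(l * (s - τ s))) := by
          apply Real.exp_le_exp.2
          nlinarith [mul_nonneg hl0.le hτs.1]
        have h6 : x (s - τ s) * Real.exp (-(l * s)) ≤ x s * Real.exp (-(l * s)) :=
          (mul_le_mul_of_nonneg_left h5 hxτ.le).trans h3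
        exact le_of_mul_le_mul_right h6 (Real.exp_pos _)
      have h7 : 0 ≤ b s * (x (s - τ s) * Real.exp (K - x (s - σ s)) - x s) - l * x s := by
        by_contra! hh
        have := mul_neg_of_neg_of_pos hh (Real.exp_pos (-(l * s)))
        linarith
      have h8 : x (s - τ s) * Real.exp (K - x (s - σ s)) ≤ x s * Real.exp K :=
        mul_le_mul h4 (Real.exp_le_exp.2 (by linarith)) (Real.exp_pos _).le hxs.le
      have hbs := h.hb₀.trans_le (h.hb s)
      have h9 : b s * (x (s - τ s) * Real.exp (K - x (s - σ s)) - x s) ≤ B * (x s * Real.exp K) := by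
        calc _ ≤ b s * (x s * Real.exp K) := mul_le_mul_of_nonneg_left (by linarith) hbs.le
          _ ≤ _ := mul_le_mul_of_nonneg_right (h.hB s) (by positivity)
      rw [hl] at h7
      nlinarith
    have hdec := h.decay (s := s) (t := t - σ t) (by linarith [hs.1]) hst
    have hlip := h.Hlip hst
    have hsr := hs.1
    have h10 : x s ≤ K * Real.exp (B * (2 * r)) := by
      have h11 : Real.exp (-(B * (2 * r))) ≤ Real.exp (-(H (t - σ t) - H s)) := by
        apply Real.exp_le_exp.2
        have : B * (t - σ t - s) ≤ B * (2 * r) := mul_le_mul_of_nonneg_left (by linarith) hB0.le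
        linarith
      have hxs := h.pos (t := s) (by linarith)
      have h12 : x s * Real.exp (-(B * (2 * r))) ≤ K :=
        (mul_le_mul_of_nonneg_left h11 hxs.le).trans (hdec.trans hKle)
      rw [Real.exp_neg, ← div_eq_mul_inv, div_le_iff₀ (Real.exp_pos _)] at h12
      exact h12
    have h13 := hsm t ⟨by linarith, le_rfl⟩
    have h14 : x t ≤ x s * Real.exp (l * (t - s)) := by
      have h15 : x t * Real.exp (-(l * t)) ≤ (x s * Real.exp (l * (t - s))) * Real.exp (-(l * t)) := by
        rw [mul_assoc, ← Real.exp_add, show l * (t - s) + -(l * t) = -(l * s) by ring]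
        exact h13
      exact le_of_mul_le_mul_right h15 (Real.exp_pos _)
    refine h14.trans (mul_le_mul h10 (Real.exp_le_exp.2 ?_) (Real.exp_pos _).le (by positivity))
    exact mul_le_mul_of_nonneg_left (by linarith) hl0.le


theorem stepU (h : NichCore t₀ r K b₀ B b H τ σ x) {I S Z : ℝ} (hS : 0 < S)
    (hup : ∀ ε > 0, ∀ᶠ t in atTop, x t ≤ S + ε)
    (hlo : ∀ ε > 0, ∀ᶠ t in atTop, I - ε ≤ x t)
    (hZ : ∀ ε > 0, ∀ᶠ t in atTop, H t - H (t - σ t) ≤ Z + ε)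
    (hlim : ∀ c, (∀ᶠ t in atTop, x t ≤ c) → S ≤ c) :
    S ≤ max K (Real.exp (K - I) * S + (K - Real.exp (K - I) * S) * Real.exp (-Z)) := by
  by_contra! hcon
  have hr := h.hr
  obtain ⟨G, hG⟩ : ∃ G : ℝ → ℝ, G = fun ε => max (K + Real.log ((S + ε) / (S - 2 * ε)))
    (Real.exp (K - (I - ε)) * (S + ε) + ((K + Real.log ((S + ε) / (S - 2 * ε)))
      - Real.exp (K - (I - ε)) * (S + ε)) * Real.exp (-(Z + ε))) + ε := ⟨_, rfl⟩
  have hGc : ContinuousAt G 0 := by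
    have hlog : ContinuousAt (fun ε : ℝ => Real.log ((S + ε) / (S - 2 * ε))) 0 := by
      apply ContinuousAt.log
      · apply ContinuousAt.div (by fun_prop) (by fun_prop)
        simpa using hS.ne'
      · simp [hS.ne']
    rw [hG]
    fun_prop
  have hG0 : G 0 < S := by
    rw [hG]; simpa [hS.ne', and_comm] using hcon
  have hev1 : ∀ᶠ ε in 𝓝[>] (0:ℝ), G ε < S :=
    (hGc.eventually_lt continuousAt_const hG0).filter_mono nhdsWithin_le_nhds
  have hev2 : ∀ᶠ ε in 𝓝[>] (0:ℝ), ε ∈ Ioo 0 (S / 2) := Ioo_mem_nhdsGT (by linarith)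
  obtain ⟨ε, hGε, hε, hε2⟩ := (hev1.and hev2).exists
  rw [hG] at hGε
  obtain ⟨N, hN⟩ : ∃ N, N = Real.exp (K - (I - ε)) * (S + ε) := ⟨_, rfl⟩
  obtain ⟨K', hK'⟩ : ∃ K', K' = K + Real.log ((S + ε) / (S - 2 * ε)) := ⟨_, rfl⟩
  simp only [← hN, ← hK'] at hGε
  obtain ⟨T, hT⟩ := eventually_atTop.1 ((hup ε hε).and ((hlo ε hε).and (hZ ε hε)))
  obtain ⟨T1, hT1⟩ : ∃ T1, T1 = max T t₀ + 2 * r + 1 := ⟨_, rfl⟩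
  have hT1T : T + 2 * r + 1 ≤ T1 := by rw [hT1]; linarith [le_max_left T t₀]
  have hT1t : t₀ + 2 * r + 1 ≤ T1 := by rw [hT1]; linarith [le_max_right T t₀]
  have hF : ∀ u, T + r ≤ u → t₀ + r ≤ u →
      x (u - τ u) * Real.exp (K - x (u - σ u)) ≤ (S + ε) * Real.exp (K - x (u - σ u)) := by
    intro u hu hu'
    have hτ := h.hτ u (by linarith)
    exact mul_le_mul_of_nonneg_right (hT (u - τ u) (by linarith)).1 (Real.exp_pos _).le
  have hdrop := nich_drop (f := x) (T := T1) (c := S - ε) (η := b₀ * ε) (L := 0)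
    (mul_pos h.hb₀ hε) (fun t ht => h.hd t (by linarith))
    (fun t ht => (h.pos (by linarith)).le) (by
      intro t ht hxt
      by_contra! hh
      have hbt := h.hb t
      have h1 : -ε < x (t - τ t) * Real.exp (K - x (t - σ t)) - x t := by
        by_contra! hh2
        have h3 : b t * (x (t - τ t) * Real.exp (K - x (t - σ t)) - x t) ≤ b t * (-ε) :=
          mul_le_mul_of_nonneg_left hh2 (h.hb₀.le.trans hbt)
        nlinarith
      have hσ := h.hσ t (by linarith)
      have h2 := hF t (by linarith) (by linarith)
      have h3 : S - 2 * ε < (S + ε) * Real.exp (K - x (t - σ t)) := by linarith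
      have h4 : x (t - σ t) ≤ K' := by
        have hp : 0 < S - 2 * ε := by linarith
        have h5 := Real.log_lt_log hp h3
        rw [Real.log_mul (by linarith) (Real.exp_pos _).ne', Real.log_exp] at h5
        rw [hK', Real.log_div (by linarith) hp.ne']
        linarith
      have h6 := h.winU (N := N) (s := t - σ t) (t := t) (by linarith) (by linarith)
        (fun u hu hu' => by
          refine (hF u (by linarith) (by linarith)).trans ?_
          have hσu := h.hσ u (by linarith)
          rw [hN, mul_comm]
          apply mul_le_mul_of_nonneg_right _ (by linarith)
          apply Real.exp_le_exp.2
          linarith [(hT (u - σ u) (by linarith)).2.1])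
      have hΔ := h.Hmono (s := t - σ t) (t := t) (by linarith)
      have hΔ2 := (hT t (by linarith)).2.2
      have h7 : (x (t - σ t) - N) * Real.exp (-(H t - H (t - σ t))) ≤
          (K' - N) * Real.exp (-(H t - H (t - σ t))) :=
        mul_le_mul_of_nonneg_right (by linarith) (Real.exp_pos _).le
      rcases le_total K' N with hKN | hKN
      · have h8 : (K' - N) * Real.exp (-(H t - H (t - σ t))) ≤ (K' - N) * Real.exp (-(Z + ε)) :=
          mul_le_mul_of_nonpos_left (Real.exp_le_exp.2 (by linarith)) (by linarith)
        linarith [le_max_right K' (N + (K' - N) * Real.exp (-(Z + ε)))]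
      · have h8 : (K' - N) * Real.exp (-(H t - H (t - σ t))) ≤ (K' - N) * 1 :=
          mul_le_mul_of_nonneg_left (Real.exp_le_one_iff.2 (by linarith)) (by linarith)
        linarith [le_max_left K' (N + (K' - N) * Real.exp (-(Z + ε)))])
  linarith [hlim _ hdrop]

theorem stepL (h : NichCore t₀ r K b₀ B b H τ σ x) {I S Z : ℝ} (hI : 0 < I)
    (hup : ∀ ε > 0, ∀ᶠ t in atTop, x t ≤ S + ε)
    (hlo : ∀ ε > 0, ∀ᶠ t in atTop, I - ε ≤ x t)
    (hZ : ∀ ε > 0, ∀ᶠ t in atTop, H t - H (t - σ t) ≤ Z + ε)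
    (hlim : ∀ c, (∀ᶠ t in atTop, c ≤ x t) → c ≤ I) :
    min K (Real.exp (K - S) * I + (K - Real.exp (K - S) * I) * Real.exp (-Z)) ≤ I := by
  by_contra! hcon
  have hr := h.hr
  obtain ⟨G, hG⟩ : ∃ G : ℝ → ℝ, G = fun ε => min (K + Real.log ((I - ε) / (I + 2 * ε)))
    (Real.exp (K - (S + ε)) * (I - ε) + ((K + Real.log ((I - ε) / (I + 2 * ε)))
      - Real.exp (K - (S + ε)) * (I - ε)) * Real.exp (-(Z + ε))) - ε := ⟨_, rfl⟩
  have hGc : ContinuousAt G 0 := by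
    have hlog : ContinuousAt (fun ε : ℝ => Real.log ((I - ε) / (I + 2 * ε))) 0 := by
      apply ContinuousAt.log
      · apply ContinuousAt.div (by fun_prop) (by fun_prop)
        simpa using hI.ne'
      · simp [hI.ne']
    rw [hG]
    fun_prop
  have hG0 : I < G 0 := by
    rw [hG]; simpa [hI.ne', and_comm] using hcon
  have hev1 : ∀ᶠ ε in 𝓝[>] (0:ℝ), I < G ε :=
    (continuousAt_const.eventually_lt hGc hG0).filter_mono nhdsWithin_le_nhds
  have hev2 : ∀ᶠ ε in 𝓝[>] (0:ℝ), ε ∈ Ioo 0 (I / 2) := Ioo_mem_nhdsGT (by linarith)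
  obtain ⟨ε, hGε, hε, hε2⟩ := (hev1.and hev2).exists
  rw [hG] at hGε
  obtain ⟨N, hN⟩ : ∃ N, N = Real.exp (K - (S + ε)) * (I - ε) := ⟨_, rfl⟩
  obtain ⟨K', hK'⟩ : ∃ K', K' = K + Real.log ((I - ε) / (I + 2 * ε)) := ⟨_, rfl⟩
  simp only [← hN, ← hK'] at hGε
  obtain ⟨T, hT⟩ := eventually_atTop.1 ((hup ε hε).and ((hlo ε hε).and (hZ ε hε)))
  obtain ⟨C, hC⟩ := h.bdd
  obtain ⟨T1, hT1⟩ : ∃ T1, T1 = max T t₀ + 2 * r + 1 := ⟨_, rfl⟩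
  have hT1T : T + 2 * r + 1 ≤ T1 := by rw [hT1]; linarith [le_max_left T t₀]
  have hT1t : t₀ + 2 * r + 1 ≤ T1 := by rw [hT1]; linarith [le_max_right T t₀]
  have hF : ∀ u, T + r ≤ u → t₀ + r ≤ u →
      (I - ε) * Real.exp (K - x (u - σ u)) ≤ x (u - τ u) * Real.exp (K - x (u - σ u)) := by
    intro u hu hu'
    have hτ := h.hτ u (by linarith)
    exact mul_le_mul_of_nonneg_right (hT (u - τ u) (by linarith)).2.1 (Real.exp_pos _).le
  have hdrop := nich_drop (f := fun t => - x t) (T := T1) (c := -(I + ε)) (η := b₀ * ε) (L := -C)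
    (mul_pos h.hb₀ hε) (fun t ht => (h.hd t (by linarith)).neg)
    (fun t ht => neg_le_neg (hC t (by linarith))) (by
      intro t ht hxt
      by_contra! hh
      have hbt := h.hb t
      have h1 : x (t - τ t) * Real.exp (K - x (t - σ t)) - x t < ε := by
        by_contra! hh2
        have h3 : b t * ε ≤ b t * (x (t - τ t) * Real.exp (K - x (t - σ t)) - x t) :=
          mul_le_mul_of_nonneg_left hh2 (h.hb₀.le.trans hbt)
        nlinarith
      have hσ := h.hσ t (by linarith)
      have h2 := hF t (by linarith) (by linarith)
      have h3 : (I - ε) * Real.exp (K - x (t - σ t)) < I + 2 * ε := by linarith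
      have hp : 0 < I - ε := by linarith
      have h4 : K' ≤ x (t - σ t) := by
        have h5 := Real.log_lt_log (by positivity) h3
        rw [Real.log_mul (by linarith) (Real.exp_pos _).ne', Real.log_exp] at h5
        rw [hK', Real.log_div hp.ne' (by linarith)]
        linarith
      have h6 := h.winL (N := N) (s := t - σ t) (t := t) (by linarith) (by linarith)
        (fun u hu hu' => by
          refine le_trans ?_ (hF u (by linarith) (by linarith))
          have hσu := h.hσ u (by linarith)
          rw [hN, mul_comm]
          apply mul_le_mul_of_nonneg_left _ (by linarith)
          apply Real.exp_le_exp.2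
          linarith [(hT (u - σ u) (by linarith)).1])
      have hΔ := h.Hmono (s := t - σ t) (t := t) (by linarith)
      have hΔ2 := (hT t (by linarith)).2.2
      have h7 : (K' - N) * Real.exp (-(H t - H (t - σ t))) ≤
          (x (t - σ t) - N) * Real.exp (-(H t - H (t - σ t))) :=
        mul_le_mul_of_nonneg_right (by linarith) (Real.exp_pos _).le
      rcases le_total N K' with hKN | hKN
      · have h8 : (K' - N) * Real.exp (-(Z + ε)) ≤ (K' - N) * Real.exp (-(H t - H (t - σ t))) :=
          mul_le_mul_of_nonneg_left (Real.exp_le_exp.2 (by linarith)) (by linarith)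
        linarith [min_le_right K' (N + (K' - N) * Real.exp (-(Z + ε)))]
      · have h8 : (K' - N) * 1 ≤ (K' - N) * Real.exp (-(H t - H (t - σ t))) :=
          mul_le_mul_of_nonpos_left (Real.exp_le_one_iff.2 (by linarith)) (by linarith)
        linarith [min_le_left K' (N + (K' - N) * Real.exp (-(Z + ε)))])
  have := hlim (I + ε) (hdrop.mono fun t ht => by linarith)
  linarith

theorem main (h : NichCore t₀ r K b₀ B b H τ σ x) {Z : ℝ} (hZ0 : 0 ≤ Z)
    (hZ : ∀ ε > 0, ∀ᶠ t in atTop, H t - H (t - σ t) ≤ Z + ε)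
    (hc : (Real.exp Z - 1) * K ≤ 1) : Tendsto x atTop (𝓝 K) := by
  obtain ⟨m, hm, hmx⟩ := h.persist
  obtain ⟨C, hC⟩ := h.bdd
  have hge : ∀ᶠ t in atTop, m ≤ x t := (eventually_ge_atTop t₀).mono fun t ht => hmx t ht
  have hle : ∀ᶠ t in atTop, x t ≤ C := (eventually_ge_atTop t₀).mono fun t ht => hC t ht
  have bU : IsBoundedUnder (· ≤ ·) atTop x := ⟨C, by simpa using hle⟩
  have bL : IsBoundedUnder (· ≥ ·) atTop x := ⟨m, by simpa using hge⟩
  have cU : IsCoboundedUnder (· ≤ ·) atTop x := bL.isCoboundedUnder_le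
  have cL : IsCoboundedUnder (· ≥ ·) atTop x := bU.isCoboundedUnder_ge
  have hIS : liminf x atTop ≤ limsup x atTop := liminf_le_limsup bU bL
  have hI : 0 < liminf x atTop := hm.trans_le (le_liminf_of_le cL hge)
  have hup : ∀ ε > 0, ∀ᶠ t in atTop, x t ≤ limsup x atTop + ε := fun ε hε =>
    (eventually_lt_of_limsup_lt (b := limsup x atTop + ε) (by linarith) bU).mono fun t ht => ht.le
  have hlo : ∀ ε > 0, ∀ᶠ t in atTop, liminf x atTop - ε ≤ x t := fun ε hε =>
    (eventually_lt_of_lt_liminf (b := liminf x atTop - ε) (by linarith) bL).mono fun t ht => ht.le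
  have h1 := h.stepU (hI.trans_le hIS) hup hlo hZ (fun c hc => limsup_le_of_le cU hc)
  have h2 := h.stepL hI hup hlo hZ (fun c hc => le_liminf_of_le cL hc)
  rw [Real.exp_neg] at h1 h2
  have h3 := nich_alg h.hK hI hIS (Real.one_le_exp hZ0) hc h1 h2
  exact tendsto_of_liminf_eq_limsup h3.1 h3.2 bU bL

end NichCore

/- STATEMENT 8 (Theorem 3.1): for the one-pair Nicholson equation with p > δ > 0,
   if ζ_M := limsup_{t→∞} ∫_{t−σ(t)}^t β(s) ds satisfies
   (e^{δζ_M} − 1) log(p/δ) ≤ 1, then K = (1/a) log(p/δ) is globally attractive: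
   every solution with admissible initial data converges to K. -/
theorem nicholson_one_pair_global_attractivity
    (p a δ : ℝ) (hδ : 0 < δ) (hpδ : δ < p) (ha : 0 < a)
    (t₀ : ℝ) (β τ σ : ℝ → ℝ)
    (hβc : ContinuousOn β (Set.Ici t₀))
    (hτc : ContinuousOn τ (Set.Ici t₀)) (hσc : ContinuousOn σ (Set.Ici t₀))
    (hτ0 : ∀ t ∈ Set.Ici t₀, 0 ≤ τ t) (hσ0 : ∀ t ∈ Set.Ici t₀, 0 ≤ σ t)
    (βminus : ℝ) (hβminus : IsGLB (β '' Set.Ici t₀) βminus) (hβmpos : 0 < βminus)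
    (hβub : ∃ B, ∀ t ∈ Set.Ici t₀, β t ≤ B)
    (τbar : ℝ) (hτbar : IsLUB (τ '' Set.Ici t₀ ∪ σ '' Set.Ici t₀) τbar)
    -- ζ_M := limsup_{t→∞} ∫_{t−σ(t)}^t β(s) ds
    (ζM : ℝ)
    (hζM : ζM = Filter.limsup (fun t => ∫ s in (t - σ t)..t, β s) Filter.atTop)
    -- hypothesis (h1)
    (hcond : (Real.exp (δ * ζM) - 1) * Real.log (p / δ) ≤ 1)
    -- K = (1/a) log(p/δ)
    (K : ℝ) (hKdef : K = (1 / a) * Real.log (p / δ)) :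
    ∀ x : ℝ → ℝ, NicholsonSolution1 p a δ t₀ τbar β τ σ x →
      Filter.Tendsto x Filter.atTop (nhds K) := by
  intro x hx
  obtain ⟨hxc, hxd, hx0, hx1⟩ := hx
  obtain ⟨B, hB⟩ := hβub
  have hβm : ∀ t, t₀ ≤ t → βminus ≤ β t := fun t ht => hβminus.1 ⟨t, ht, rfl⟩
  have hτr : ∀ t, t₀ ≤ t → τ t ≤ τbar := fun t ht => hτbar.1 (Or.inl ⟨t, ht, rfl⟩)
  have hσr : ∀ t, t₀ ≤ t → σ t ≤ τbar := fun t ht => hτbar.1 (Or.inr ⟨t, ht, rfl⟩)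
  have hr : 0 ≤ τbar := (hτ0 t₀ self_mem_Ici).trans (hτr t₀ le_rfl)
  have hbc : Continuous (fun s => δ * β (max t₀ s)) := by
    refine continuous_const.mul ?_
    exact hβc.comp_continuous (by fun_prop) (fun s => mem_Ici.2 (le_max_left _ _))
  have hK : 0 < Real.log (p / δ) := Real.log_pos (by rw [lt_div_iff₀ hδ]; linarith)
  have hexpK : Real.exp (Real.log (p / δ)) = p / δ := Real.exp_log (div_pos (hδ.trans hpδ) hδ)
  have core : NichCore t₀ τbar (Real.log (p / δ)) (δ * βminus) (δ * B)
      (fun s => δ * β (max t₀ s)) (fun t => ∫ s in t₀..t, δ * β (max t₀ s)) τ σ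
      (fun t => a * x t) := by
    refine ⟨hK, by positivity, ?_, ?_, hr, ?_, ?_, ?_, ?_, ?_, ?_, ?_⟩
    · exact fun t => mul_le_mul_of_nonneg_left (hβm _ (le_max_left _ _)) hδ.le
    · exact fun t => mul_le_mul_of_nonneg_left (hB _ (mem_Ici.2 (le_max_left _ _))) hδ.le
    · exact fun t => (hbc.integral_hasStrictDerivAt t₀ t).hasDerivAt
    · exact fun t ht => ⟨hτ0 t ht, hτr t ht⟩
    · exact fun t ht => ⟨hσ0 t ht, hσr t ht⟩
    · exact continuousOn_const.mul hxc
    · intro t ht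
      have h1 := ((hxd t ht.le).hasDerivAt (Ici_mem_nhds ht)).const_mul a
      refine HasDerivAt.congr_deriv h1 ?_
      rw [sub_eq_add_neg (Real.log (p / δ)), Real.exp_add, hexpK, max_eq_right ht.le, neg_mul]
      field_simp
    · exact fun s hs hs' => mul_nonneg ha.le (hx0 s hs hs')
    · exact mul_pos ha hx1
  have hB0 : 0 ≤ B := hβmpos.le.trans ((hβm t₀ le_rfl).trans (hB t₀ self_mem_Ici))
  have hHeq : ∀ t, t₀ + τbar ≤ t → (∫ s in t₀..t, δ * β (max t₀ s))
      - (∫ s in t₀..(t - σ t), δ * β (max t₀ s)) = δ * ∫ s in (t - σ t)..t, β s := by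
    intro t ht
    rw [intervalIntegral.integral_interval_sub_left (hbc.intervalIntegrable _ _)
      (hbc.intervalIntegrable _ _), ← intervalIntegral.integral_const_mul]
    apply intervalIntegral.integral_congr
    intro s hs
    have h1 := hσr t (by linarith)
    have h2 := hσ0 t (mem_Ici.2 (by linarith))
    rw [uIcc_of_le (by linarith)] at hs
    simp only
    rw [max_eq_right (by linarith [hs.1])]
  have hnn : ∀ t, t₀ + τbar ≤ t → 0 ≤ ∫ s in (t - σ t)..t, β s := by
    intro t ht
    have h2 := hσ0 t (mem_Ici.2 (by linarith))
    have h3 := core.Hmono (s := t - σ t) (t := t) (by linarith)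
    rw [hHeq t ht] at h3
    exact nonneg_of_mul_nonneg_right h3 hδ
  have hub : ∀ t, t₀ + τbar ≤ t → (∫ s in (t - σ t)..t, β s) ≤ B * τbar := by
    intro t ht
    have h2 := hσ0 t (mem_Ici.2 (by linarith))
    have h1 := hσr t (by linarith)
    have h3 := core.Hlip (s := t - σ t) (t := t) (by linarith)
    rw [hHeq t ht, mul_assoc] at h3
    have h4 := le_of_mul_le_mul_left h3 hδ
    have h5 : B * (t - (t - σ t)) ≤ B * τbar := mul_le_mul_of_nonneg_left (by linarith) hB0
    linarith
  have bU : IsBoundedUnder (· ≤ ·) atTop (fun t => ∫ s in (t - σ t)..t, β s) :=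
    ⟨B * τbar, by
      rw [eventually_map]
      exact (eventually_ge_atTop (t₀ + τbar)).mono fun t ht => hub t ht⟩
  have hζ0 : 0 ≤ ζM := by
    rw [hζM]
    refine le_limsup_of_frequently_le ?_ bU
    exact ((eventually_ge_atTop (t₀ + τbar)).mono fun t ht => hnn t ht).frequently
  have hfin := core.main (Z := δ * ζM) (by positivity) (by
    intro ε hε
    have h1 : limsup (fun t => ∫ s in (t - σ t)..t, β s) atTop < ζM + ε / δ := by
      rw [← hζM]; linarith [div_pos hε hδ]
    filter_upwards [eventually_lt_of_limsup_lt h1 bU, eventually_ge_atTop (t₀ + τbar)] with t ht ht'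
    rw [hHeq t ht']
    have h2 := mul_le_mul_of_nonneg_left ht.le hδ.le
    have h3 : δ * (ζM + ε / δ) = δ * ζM + ε := by field_simp
    linarith) hcond
  have hfin2 := hfin.const_mul (1 / a)
  rw [← hKdef] at hfin2
  refine hfin2.congr fun t => ?_
  field_simp
end
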